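/- There exist at least 1942 pairwise inequivalent s-extremal singly even self-dual [78,39,14] codes; that is, there exist at least 1942 pairwise inequivalent singly even self-dual codes of length 78 with minimum weight 14 whose shadows have minimum weight 15. -/

import Mathlib

open Finset

/-- Hamming weight of a binary vector. -/
def wt {n : ℕ} (x : Fin n → ZMod 2) : ℕ := hammingNorm x

/-- The dual of a set of binary vectors with respect to the standard inner product. -/
def dualSet {n : ℕ} (C : Set (Fin n → ZMod 2)) : Set (Fin n → ZMod 2) :=
  {x | ∀ y ∈ C, ∑ i, x i * y i = 0}

/-- A binary linear code is self-dual if it equals its dual code. -/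
def IsSelfDual {n : ℕ} (C : Submodule (ZMod 2) (Fin n → ZMod 2)) : Prop :=
  (C : Set (Fin n → ZMod 2)) = dualSet (C : Set (Fin n → ZMod 2))

/-- A self-dual code is singly even if some codeword has weight not divisible by 4. -/
def IsSinglyEvenSelfDual {n : ℕ} (C : Submodule (ZMod 2) (Fin n → ZMod 2)) : Prop :=
  IsSelfDual C ∧ ∃ x ∈ C, ¬ (4 ∣ wt x)

/-- The doubly even subcode `C₀` of `C` (as a set): codewords of weight ≡ 0 (mod 4). -/
def evenSub {n : ℕ} (C : Submodule (ZMod 2) (Fin n → ZMod 2)) : Set (Fin n → ZMod 2) :=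
  {x | x ∈ C ∧ 4 ∣ wt x}

/-- The shadow `S = C₀^⊥ \ C` of a singly even self-dual code. -/
def shadow {n : ℕ} (C : Submodule (ZMod 2) (Fin n → ZMod 2)) : Set (Fin n → ZMod 2) :=
  dualSet (evenSub C) \ (C : Set (Fin n → ZMod 2))

/-- The minimum (nonzero) weight of a set of vectors. -/
noncomputable def minWtSet {n : ℕ} (S : Set (Fin n → ZMod 2)) : ℕ :=
  sInf {w | ∃ x ∈ S, x ≠ 0 ∧ wt x = w}

/-- The minimum weight of a code. -/
noncomputable def minWt {n : ℕ} (C : Submodule (ZMod 2) (Fin n → ZMod 2)) : ℕ :=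
  minWtSet (C : Set (Fin n → ZMod 2))

/-- A singly even self-dual code of length `n` is s-extremal if
`d(S) = n/2 + 4 - 2 d(C)`. -/
def IsSExtremal {n : ℕ} (C : Submodule (ZMod 2) (Fin n → ZMod 2)) : Prop :=
  IsSinglyEvenSelfDual C ∧
    (minWtSet (shadow C) : ℤ) = ((n / 2 : ℕ) : ℤ) + 4 - 2 * (minWt C : ℤ)

/-- Two codes are equivalent if one is obtained from the other by permuting coordinates. -/
def CodeEquiv {n : ℕ} (C D : Submodule (ZMod 2) (Fin n → ZMod 2)) : Prop :=
  ∃ σ : Equiv.Perm (Fin n),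
    Submodule.map (LinearMap.funLeft (ZMod 2) (ZMod 2) σ) C = D

/-- The neighbor `C₀ ∪ (t + C₀)` of `C` obtained from a shadow vector `t`:
the span of the doubly even subcode together with `t`. -/
def neighborCode {n : ℕ} (C : Submodule (ZMod 2) (Fin n → ZMod 2))
    (t : Fin n → ZMod 2) : Submodule (ZMod 2) (Fin n → ZMod 2) :=
  Submodule.span (ZMod 2) (evenSub C ∪ {t})

/-!
Let `D` be an extremal doubly even self-dual code of length 80. The codewords that agree at two
given coordinates, with these coordinates deleted, form an s-extremal code of length 78. The shadow
of the latter remembers `D`: an equivalence between two such codes extends to an isomorphism of the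
codes of length 80 that maps the one pair of coordinates to the other.

The thirteen codes `D` used here are generated by two words of length 80 and their shifts by powers
of a permutation of order 20. The numbers of words of weight 16 with ones at four coordinates show
that the shifts are the only isomorphisms between them, so the `13 * (80 * 79)` ordered pairs of
coordinates fall into classes of at most 40 elements, more than 1941 of them.
-/

namespace SExtremal78

/-! ### Lists of words and bit masks -/

section Masks

/-- The number whose `t`-th binary digit is the value of `P` at the `t`-th entry of `L`, so that a
predicate on a long list of words is handled by a few operations on long numbers. -/
def mask (P : ℕ → Bool) (L : List ℕ) : ℕ := L.foldr (fun w m => Nat.bit (P w) m) 0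

variable {P Q : ℕ → Bool} {L : List ℕ}

@[simp] lemma mask_nil : mask P [] = 0 := rfl

@[simp] lemma mask_cons (w : ℕ) : mask P (w :: L) = Nat.bit (P w) (mask P L) := rfl

lemma mask_append (A B : List ℕ) : mask P (A ++ B) = mask P A + mask P B <<< A.length := by
  induction A with
  | nil => simp
  | cons w A ih =>
    simp only [List.cons_append, mask_cons, ih, List.length_cons, Nat.bit_val, Nat.shiftLeft_eq]
    ring

lemma mask_lt (P : ℕ → Bool) (L : List ℕ) : mask P L < 2 ^ L.length := by
  induction L with
  | nil => simp
  | cons w L ih => exact Nat.bit_lt_two_pow_succ_iff.2 ih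

lemma mask_append_mod (A B : List ℕ) : mask P (A ++ B) % 2 ^ A.length = mask P A := by
  rw [mask_append, Nat.shiftLeft_eq, Nat.add_mul_mod_self_right, Nat.mod_eq_of_lt (mask_lt P A)]

lemma mask_append_shiftRight (A B : List ℕ) : mask P (A ++ B) >>> A.length = mask P B := by
  rw [mask_append, Nat.shiftLeft_eq, Nat.shiftRight_eq_div_pow,
    Nat.add_mul_div_right _ _ (Nat.two_pow_pos _), Nat.div_eq_of_lt (mask_lt P A), zero_add]

lemma mask_map (f : ℕ → ℕ) : mask P (L.map f) = mask (fun w => P (f w)) L := by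
  simp only [mask, List.foldr_map]

lemma mask_xor : mask P L ^^^ mask Q L = mask (fun w => P w ^^ Q w) L := by
  induction L with
  | nil => simp
  | cons w L ih => simp only [mask_cons, Nat.xor_bit, ih]

lemma mask_and : mask P L &&& mask Q L = mask (fun w => P w && Q w) L := by
  induction L with
  | nil => simp
  | cons w L ih => simp only [mask_cons, Nat.land_bit, ih]

lemma mask_eq_zero : mask P L = 0 ↔ L.filter P = [] := by
  induction L with
  | nil => simp
  | cons w L ih => cases h : P w <;> simp [h, ih]

/-- The mask of length `n` of a constant predicate. -/
def fill (b : Bool) (n : ℕ) : ℕ := bif b then 1 <<< n - 1 else 0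

lemma fill_length (b : Bool) : fill b L.length = mask (fun _ => b) L := by
  induction L with
  | nil => cases b <;> rfl
  | cons w L ih =>
    rw [mask_cons, ← ih]
    have := Nat.two_pow_pos L.length
    cases b
    · rfl
    · simp [fill, Nat.shiftLeft_eq, Nat.bit_val, pow_succ]
      omega

/-- A full adder moving along a list of masks: the parity of their sum, and the carries. -/
def compress : ℕ → List ℕ → ℕ × List ℕ
  | s, [] => (s, [])
  | s, [a] => (s ^^^ a, [s &&& a])
  | s, a :: b :: xs =>
    ((compress (s ^^^ a ^^^ b) xs).1,
      ((s &&& a) ^^^ ((s ^^^ a) &&& b)) :: (compress (s ^^^ a ^^^ b) xs).2)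

/-- The mask of the entries at which the number of ones among the masks `xs` is `v` modulo
`2 ^ d`. -/
def countMask (n : ℕ) : ℕ → List ℕ → ℕ → ℕ
  | 0, _, _ => fill true n
  | d + 1, xs, v =>
    ((compress 0 xs).1 ^^^ fill (!v.testBit 0) n) &&& countMask n d (compress 0 xs).2 (v / 2)

lemma exists_compress_eq (L : List ℕ) : ∀ (S : ℕ → Bool) (Ps : List (ℕ → Bool)),
    ∃ (S' : ℕ → Bool) (Qs : List (ℕ → Bool)),
      compress (mask S L) (Ps.map (mask · L)) = (mask S' L, Qs.map (mask · L)) ∧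
      ∀ w, (S w).toNat + Ps.countP (· w) = (S' w).toNat + 2 * Qs.countP (· w)
  | S, [] => ⟨S, [], rfl, by simp⟩
  | S, [A] => ⟨fun w => S w ^^ A w, [fun w => S w && A w],
      by simp only [List.map_cons, List.map_nil, compress, mask_xor, mask_and],
      fun w => by cases hS : S w <;> cases hA : A w <;> simp [hS, hA]⟩
  | S, A :: B :: Ps => by
    obtain ⟨S', Qs, h, hcount⟩ := exists_compress_eq L (fun w => S w ^^ A w ^^ B w) Ps
    refine ⟨S', (fun w => (S w && A w) ^^ ((S w ^^ A w) && B w)) :: Qs, ?_, fun w => ?_⟩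
    · simp only [List.map_cons, compress, mask_xor, mask_and, h]
    · have hadder (a b c : Bool) : a.toNat + b.toNat + c.toNat =
          (a ^^ b ^^ c).toNat + 2 * ((a && b) ^^ ((a ^^ b) && c)).toNat := by
        cases a <;> cases b <;> cases c <;> rfl
      have hite (b : Bool) : (if b = true then 1 else 0) = b.toNat := by cases b <;> rfl
      have := hadder (S w) (A w) (B w)
      have := hcount w
      simp only [List.countP_cons, hite]
      omega

lemma countMask_eq (d : ℕ) : ∀ (Ps : List (ℕ → Bool)) (v : ℕ),
    countMask L.length d (Ps.map (mask · L)) v =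
      mask (fun w => Ps.countP (· w) % 2 ^ d == v % 2 ^ d) L := by
  induction d with
  | zero => exact fun _ _ => by simp [countMask, fill_length, Nat.mod_one]
  | succ d ih =>
    intro Ps v
    obtain ⟨S, Qs, h, hcount⟩ := exists_compress_eq L (fun _ => false) Ps
    have hzero : mask (fun _ => false) L = 0 := (fill_length false).symm
    rw [hzero] at h
    simp only [countMask, h, ih, fill_length, mask_xor, mask_and]
    congr 1
    funext w
    have hw : Ps.countP (· w) = (S w).toNat + 2 * Qs.countP (· w) := by simpa using hcount w
    rw [hw, pow_succ', Nat.mod_mul, Nat.mod_mul, Nat.testBit_zero, Bool.eq_iff_iff]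
    have hv := Nat.mod_two_eq_zero_or_one v
    cases S w <;> rcases hv with hv | hv <;> simp [hv, Nat.add_mul_div_left] <;> omega

end Masks

section Encoding

/-- A list of words of length 80 as a single number, together with its length. -/
def encode (L : List ℕ) : ℕ × ℕ := (Nat.ofDigits (2 ^ 80) L, L.length)

/-- Concatenation of encoded lists. -/
def join (a b : ℕ × ℕ) : ℕ × ℕ := (a.1.add (b.1.shiftLeft (Nat.mul 80 a.2)), a.2.add b.2)

lemma join_encode (A B : List ℕ) : join (encode A) (encode B) = encode (A ++ B) := by
  have h : (2 ^ 80 : ℕ) ^ A.length = 2 ^ (80 * A.length) := (pow_mul 2 80 _).symm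
  simp only [join, encode, Nat.ofDigits_append, List.length_append, Nat.add_eq,
    Nat.shiftLeft_eq', Nat.shiftLeft_eq, Nat.mul_eq, h, mul_comm]

end Encoding

section RowSums

/-- The sums (exclusive or) of `p` and `k` of the words `rs`. -/
def rowSums (rs : List ℕ) (k p : ℕ) : List ℕ :=
  (rs.sublistsLen k).map fun t => t.foldl (· ^^^ ·) p

@[simp] lemma length_rowSums (rs : List ℕ) (k p : ℕ) :
    (rowSums rs k p).length = rs.length.choose k := by simp [rowSums]

lemma rowSums_zero (rs : List ℕ) (p : ℕ) : rowSums rs 0 p = [p] := by simp [rowSums]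

lemma rowSums_nil_succ (k p : ℕ) : rowSums [] (k + 1) p = [] := by simp [rowSums]

lemma rowSums_cons_succ (r : ℕ) (rs : List ℕ) (k p : ℕ) :
    rowSums (r :: rs) (k + 1) p = rowSums rs (k + 1) p ++ rowSums rs k (p ^^^ r) := by
  simp [rowSums, List.sublistsLen_succ_cons, Function.comp_def]

lemma foldl_xor_eq (t : List ℕ) (p : ℕ) : t.foldl (· ^^^ ·) p = p ^^^ t.foldl (· ^^^ ·) 0 := by
  simpa using (List.foldl_assoc (op := fun a b : ℕ => a ^^^ b) (l := t) (a₁ := p) (a₂ := 0))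

lemma rowSums_eq_map (rs : List ℕ) (k p : ℕ) :
    rowSums rs k p = (rowSums rs k 0).map (p ^^^ ·) := by
  simp only [rowSums, List.map_map, Function.comp_def]
  exact List.map_congr_left fun t _ => foldl_xor_eq t p

-- The kernel runs the definitions below on numbers with millions of digits; recursors and the
-- functions of `Nat` save it from unfolding auxiliary definitions and instances.

/-- The mask of the words in `rowSums rs k 0` with binary digit `c` equal to one. -/
noncomputable def column (c : ℕ) (rs : List ℕ) : ℕ → ℕ :=
  rs.rec (fun _ => 0) fun r rs ih k => k.rec 0 fun k _ => (ih k.succ).add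
    (((ih k).xor (fill (r.testBit c) (rs.length.choose k))).shiftLeft (rs.length.choose k.succ))

/-- The mask of the words in `rowSums rs k p` with binary digit `c` equal to one. -/
noncomputable def columnFrom (p c : ℕ) (rs : List ℕ) (k : ℕ) : ℕ :=
  (column c rs k).xor (fill (p.testBit c) (rs.length.choose k))

/-- The mask of the words in `rowSums rs k p` with `v` ones at the places `ps` and with ones at all
places in `ys`. -/
noncomputable def selection (ps : List ℕ) (v : ℕ) (ys rs : List ℕ) (k p : ℕ) : ℕ :=
  ys.foldr (fun y m => columnFrom p y rs k &&& m)
    (countMask (rs.length.choose k) 6 (ps.map fun c => columnFrom p c rs k) v)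

/-- The words in `rowSums rs k p` selected by the mask `m`, encoded. -/
noncomputable def extract (rs : List ℕ) : ℕ → ℕ → ℕ → ℕ × ℕ :=
  rs.rec (fun k p m => (m.beq 0).rec (k.rec (p, 1) fun _ _ => (0, 0)) (0, 0))
    fun r rs ih k p m => (m.beq 0).rec
      (k.rec (p, 1) fun k _ => ((m.shiftRight (rs.length.choose k.succ)).beq 0).rec
        (join (ih k.succ p (m.mod (Nat.shiftLeft 1 (rs.length.choose k.succ))))
          (ih k (p.xor r) (m.shiftRight (rs.length.choose k.succ))))
        (ih k.succ p m))
      (0, 0)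

/-- The words in `rowSums rs k p` with `v` ones at the places `ps` and with ones at all places in
`ys`, encoded; the list is cut into pieces of at most four million words. -/
noncomputable def scan (ps : List ℕ) (v : ℕ) (ys rs : List ℕ) : ℕ → ℕ → ℕ × ℕ :=
  rs.rec (fun k p => extract [] k p (selection ps v ys [] k p))
    fun r rs ih k p => (((r :: rs).length.choose k).ble 4000000).rec
      (k.rec (extract (r :: rs) 0 p (selection ps v ys (r :: rs) 0 p))
        fun k _ => join (ih k.succ p) (ih k (p.xor r)))
      (extract (r :: rs) k p (selection ps v ys (r :: rs) k p))

lemma column_eq (c : ℕ) (rs : List ℕ) (k : ℕ) :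
    column c rs k = mask (·.testBit c) (rowSums rs k 0) := by
  induction rs generalizing k with
  | nil => cases k <;> simp [column, rowSums_zero, rowSums_nil_succ]
  | cons r rs ih =>
    cases k with
    | zero => simp [column, rowSums_zero]
    | succ k =>
      have hsum : (column c rs k).xor (fill (r.testBit c) (rs.length.choose k)) =
          mask (·.testBit c) (rowSums rs k r) := by
        rw [ih, ← length_rowSums rs k 0, fill_length, rowSums_eq_map rs k r, mask_map]
        simp only [Nat.testBit_xor, Bool.xor_comm (r.testBit c)]
        exact mask_xor
      rw [rowSums_cons_succ, mask_append, length_rowSums, ← ih, Nat.zero_xor, ← hsum]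
      rfl

lemma columnFrom_eq (p c : ℕ) (rs : List ℕ) (k : ℕ) :
    columnFrom p c rs k = mask (·.testBit c) (rowSums rs k p) := by
  rw [columnFrom, column_eq, ← length_rowSums rs k 0, fill_length, rowSums_eq_map rs k p, mask_map]
  simp only [Nat.testBit_xor, Bool.xor_comm (p.testBit c)]
  exact mask_xor

/-- The number of places in `ps` at which the word `w` has a one. -/
def weightOn (ps : List ℕ) (w : ℕ) : ℕ :=
  ps.foldr (fun p n => ((w.shiftRight p).land 1).add n) 0

lemma weightOn_eq_countP (ps : List ℕ) (w : ℕ) : weightOn ps w = ps.countP (w.testBit ·) := by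
  induction ps with
  | nil => rfl
  | cons p ps ih =>
    have hdigit : (w >>> p) &&& 1 = (w.testBit p).toNat := by
      rw [Nat.and_one_is_mod, Nat.toNat_testBit, Nat.shiftRight_eq_div_pow]
    change ((w >>> p) &&& 1) + weightOn ps w = _
    rw [hdigit, ih, List.countP_cons, add_comm]
    cases w.testBit p <;> rfl

/-- The condition on a word selected by `selection`. -/
def Selected (ps : List ℕ) (v : ℕ) (ys : List ℕ) (w : ℕ) : Bool :=
  weightOn ps w == v && ys.all (w.testBit ·)

variable {ps ys rs : List ℕ} {v : ℕ}

lemma selection_eq (hps : ps.length < 64) (hv : v < 64) (k p : ℕ) :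
    selection ps v ys rs k p = mask (Selected ps v ys) (rowSums rs k p) := by
  have hcount : countMask (rs.length.choose k) 6 (ps.map fun c => columnFrom p c rs k) v =
      mask (weightOn ps · == v) (rowSums rs k p) := by
    have := countMask_eq (L := rowSums rs k p) 6 (ps.map fun c w => w.testBit c) v
    simp only [List.map_map, Function.comp_def, length_rowSums, ← columnFrom_eq,
      List.countP_map] at this
    rw [this]
    congr 1
    funext w
    have hw : weightOn ps w < 2 ^ 6 :=
      weightOn_eq_countP ps w ▸ List.countP_le_length.trans_lt hps
    have hcountP : ps.countP (w.testBit ·) % 2 ^ 6 = weightOn ps w := by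
      rw [← weightOn_eq_countP, Nat.mod_eq_of_lt hw]
    exact congrArg₂ (· == ·) hcountP (Nat.mod_eq_of_lt hv)
  induction ys with
  | nil =>
    have hnil : Selected ps v [] = (weightOn ps · == v) := by
      funext w
      simp [Selected]
    rw [hnil, ← hcount]
    rfl
  | cons y ys ih =>
    calc columnFrom p y rs k &&& selection ps v ys rs k p
        = mask (fun w => w.testBit y && Selected ps v ys w) (rowSums rs k p) := by
          rw [ih, columnFrom_eq, mask_and]
      _ = mask (Selected ps v (y :: ys)) (rowSums rs k p) := by
          congr 1
          funext w
          simp only [Selected, List.all_cons, Bool.and_left_comm]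

lemma extract_zero (rs : List ℕ) (k p : ℕ) : extract rs k p 0 = (0, 0) := by cases rs <;> rfl

lemma beq_zero_eq_false {m : ℕ} (hm : m ≠ 0) : m.beq 0 = false :=
  Bool.eq_false_iff.2 fun h => hm (Nat.eq_of_beq_eq_true h)

lemma extract_zero_right (rs : List ℕ) (p : ℕ) {m : ℕ} (hm : m ≠ 0) :
    extract rs 0 p m = (p, 1) := by
  cases rs <;> (simp only [extract, beq_zero_eq_false hm]; rfl)

lemma extract_cons_of_lt (r : ℕ) (rs : List ℕ) (k p : ℕ) {m : ℕ} (hm : m ≠ 0)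
    (hhigh : m >>> rs.length.choose (k + 1) = 0) :
    extract (r :: rs) (k + 1) p m = extract rs (k + 1) p m := by
  have hhigh : (m.shiftRight (rs.length.choose k.succ)).beq 0 = true :=
    (Nat.beq_eq ▸ hhigh :)
  simp only [extract, beq_zero_eq_false hm, hhigh]

lemma extract_cons (r : ℕ) (rs : List ℕ) (k p : ℕ) {m : ℕ} (hm : m ≠ 0)
    (hhigh : m >>> rs.length.choose (k + 1) ≠ 0) :
    extract (r :: rs) (k + 1) p m =
      join (extract rs (k + 1) p (m % 2 ^ rs.length.choose (k + 1)))
        (extract rs k (p ^^^ r) (m >>> rs.length.choose (k + 1))) := by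
  have hhigh : (m.shiftRight (rs.length.choose k.succ)).beq 0 = false :=
    beq_zero_eq_false hhigh
  rw [← Nat.one_shiftLeft]
  simp only [extract, beq_zero_eq_false hm, hhigh]
  rfl

lemma extract_mask (P : ℕ → Bool) (rs : List ℕ) (k p : ℕ) :
    extract rs k p (mask P (rowSums rs k p)) = encode ((rowSums rs k p).filter P) := by
  by_cases hzero : mask P (rowSums rs k p) = 0
  · rw [hzero, mask_eq_zero.1 hzero, extract_zero]
    rfl
  cases k with
  | zero =>
    rw [extract_zero_right rs p hzero]
    have hp : P p = true := by simpa [rowSums_zero, mask_eq_zero] using hzero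
    simp [rowSums_zero, hp, encode]
  | succ k =>
    cases rs with
    | nil => exact absurd rfl hzero
    | cons r rs =>
      have hlen := length_rowSums rs (k + 1) p
      rw [rowSums_cons_succ] at hzero ⊢
      by_cases hhigh : mask P (rowSums rs k (p ^^^ r)) = 0
      · have hmask : mask P (rowSums rs (k + 1) p ++ rowSums rs k (p ^^^ r)) =
            mask P (rowSums rs (k + 1) p) := by
          rw [mask_append, hhigh, Nat.zero_shiftLeft, add_zero]
        rw [extract_cons_of_lt r rs k p hzero (by rw [← hlen, mask_append_shiftRight, hhigh]),
          hmask, extract_mask, List.filter_append, mask_eq_zero.1 hhigh, List.append_nil]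
      · rw [extract_cons r rs k p hzero (by rwa [← hlen, mask_append_shiftRight]), ← hlen,
          mask_append_mod, mask_append_shiftRight, extract_mask, extract_mask, join_encode,
          List.filter_append]

lemma scan_eq (hps : ps.length < 64) (hv : v < 64) (rs : List ℕ) (k p : ℕ) :
    scan ps v ys rs k p = encode ((rowSums rs k p).filter (Selected ps v ys)) := by
  have hextract (rs : List ℕ) (k p : ℕ) : extract rs k p (selection ps v ys rs k p) =
      encode ((rowSums rs k p).filter (Selected ps v ys)) := by
    rw [selection_eq hps hv, extract_mask]
  induction rs generalizing k p with
  | nil => exact hextract [] k p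
  | cons r rs ih =>
    cases hsmall : ((r :: rs).length.choose k).ble 4000000 with
    | true =>
      simp only [scan, hsmall]
      exact hextract (r :: rs) k p
    | false =>
      cases k with
      | zero =>
        simp only [scan, hsmall]
        exact hextract (r :: rs) 0 p
      | succ k =>
        rw [rowSums_cons_succ, List.filter_append, ← join_encode, ← ih, ← ih]
        simp only [scan, hsmall]
        rfl

end RowSums

/-! ### Binary vectors -/

section Vectors

variable {n : ℕ}

lemma zmod_two_eq_zero_or_one (a : ZMod 2) : a = 0 ∨ a = 1 := by decide +revert

lemma wt_eq_sum (x : Fin n → ZMod 2) : wt x = ∑ i, (x i).val := by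
  have h (a : ZMod 2) : (if a ≠ 0 then 1 else 0) = a.val := by decide +revert
  simp only [wt, hammingNorm, Finset.card_filter, h]

lemma wt_add (x y : Fin n → ZMod 2) : wt (x + y) + 2 * wt (x * y) = wt x + wt y := by
  have h (a b : ZMod 2) : (a + b).val + 2 * (a * b).val = a.val + b.val := by decide +revert
  simp only [wt_eq_sum, Finset.mul_sum, ← Finset.sum_add_distrib, Pi.add_apply, Pi.mul_apply, h]

lemma wt_comp (σ : Equiv.Perm (Fin n)) (x : Fin n → ZMod 2) : wt (x ∘ σ) = wt x := by
  simp only [wt_eq_sum, Function.comp_apply]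
  exact Equiv.sum_comp σ fun i => (x i).val

lemma dotProduct_eq_wt (x y : Fin n → ZMod 2) : x ⬝ᵥ y = (wt (x * y) : ZMod 2) := by
  simp [dotProduct, wt_eq_sum]

lemma two_dvd_wt_mul {x y : Fin n → ZMod 2} (h : x ⬝ᵥ y = 0) : 2 ∣ wt (x * y) := by
  rwa [dotProduct_eq_wt, ZMod.natCast_eq_zero_iff] at h

lemma dotProduct_eq_zero_of_mem_span {S T : Set (Fin n → ZMod 2)}
    (h : ∀ x ∈ S, ∀ y ∈ T, x ⬝ᵥ y = 0) {x y : Fin n → ZMod 2}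
    (hx : x ∈ Submodule.span (ZMod 2) S) (hy : y ∈ Submodule.span (ZMod 2) T) : x ⬝ᵥ y = 0 := by
  induction hx, hy using Submodule.span_induction₂ with
  | mem_mem x y hx hy => exact h x hx y hy
  | zero_left => exact zero_dotProduct _
  | zero_right => exact dotProduct_zero _
  | add_left x y z _ _ _ hx hy => rw [add_dotProduct, hx, hy, add_zero]
  | add_right x y z _ _ _ hx hy => rw [dotProduct_add, hx, hy, add_zero]
  | smul_left r x y _ _ h => rw [smul_dotProduct, h, smul_zero]
  | smul_right r x y _ _ h => rw [dotProduct_smul, h, smul_zero]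

lemma four_dvd_wt_of_mem_span {S : Set (Fin n → ZMod 2)} (horth : ∀ x ∈ S, ∀ y ∈ S, x ⬝ᵥ y = 0)
    (hS : ∀ x ∈ S, 4 ∣ wt x) {x : Fin n → ZMod 2} (hx : x ∈ Submodule.span (ZMod 2) S) :
    4 ∣ wt x := by
  induction hx using Submodule.span_induction with
  | mem x hx => exact hS x hx
  | zero => simp [wt]
  | add x y hx hy ihx ihy =>
    have := wt_add x y
    have := two_dvd_wt_mul (dotProduct_eq_zero_of_mem_span horth hx hy)
    omega
  | smul a x _ ih =>
    rcases zmod_two_eq_zero_or_one a with rfl | rfl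
    · simp [wt]
    · rwa [one_smul]

/-- The binary vector whose entries are the first `n` binary digits of `w`. -/
def toVec (n w : ℕ) : Fin n → ZMod 2 := fun i => if w.testBit i then 1 else 0

lemma toVec_apply_eq_one {w : ℕ} {i : Fin n} : toVec n w i = 1 ↔ w.testBit i := by simp [toVec]

lemma toVec_apply_eq_zero {w : ℕ} {i : Fin n} : toVec n w i = 0 ↔ w.testBit i = false := by
  simp [toVec]

@[simp] lemma toVec_zero : toVec n 0 = 0 := by ext; simp [toVec]

lemma toVec_xor (a b : ℕ) : toVec n (a ^^^ b) = toVec n a + toVec n b := by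
  ext i
  simp only [toVec, Nat.testBit_xor, Pi.add_apply]
  cases a.testBit i <;> cases b.testBit i <;> rfl

lemma toVec_and (a b : ℕ) : toVec n (a &&& b) = toVec n a * toVec n b := by
  ext i
  simp only [toVec, Nat.testBit_and, Pi.mul_apply]
  cases a.testBit i <;> cases b.testBit i <;> rfl

lemma wt_toVec (n w : ℕ) : wt (toVec n w) = weightOn (List.range n) w := by
  induction n with
  | zero => rfl
  | succ n ih =>
    have hn : wt (toVec (n + 1) w) = wt (toVec n w) + (toVec (n + 1) w (Fin.last n)).val := by
      simp only [wt_eq_sum, Fin.sum_univ_castSucc]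
      rfl
    rw [hn, ih, weightOn_eq_countP, weightOn_eq_countP, List.range_succ, List.countP_append]
    cases h : w.testBit n <;> simp [toVec, h, ZMod.val_one]

lemma toVec_dotProduct_eq_zero {a b : ℕ} (h : 2 ∣ weightOn (List.range n) (a &&& b)) :
    toVec n a ⬝ᵥ toVec n b = 0 := by
  rwa [dotProduct_eq_wt, ← toVec_and, wt_toVec, ZMod.natCast_eq_zero_iff]

end Vectors

/-! ### Systematic generators -/

section Systematic

variable {n : ℕ} {ps qs rs ls t t' : List ℕ} {r r' p : ℕ}

/-- The binary code of length `n` generated by the words `rs`. -/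
def rowSpan (n : ℕ) (rs : List ℕ) : Submodule (ZMod 2) (Fin n → ZMod 2) :=
  Submodule.span (ZMod 2) {v | ∃ r ∈ rs, toVec n r = v}

lemma toVec_mem_rowSpan (hr : r ∈ rs) : toVec n r ∈ rowSpan n rs :=
  Submodule.subset_span ⟨r, hr, rfl⟩

lemma mem_rowSpan {v : Fin n → ZMod 2} :
    v ∈ rowSpan n rs ↔ ∃ t : List ℕ, t.Sublist rs ∧ toVec n (t.foldl (· ^^^ ·) 0) = v := by
  induction rs generalizing v with
  | nil => simp [rowSpan, eq_comm]
  | cons r rs ih =>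
    have hset : {v | ∃ s ∈ r :: rs, toVec n s = v} =
        insert (toVec n r) {v | ∃ s ∈ rs, toVec n s = v} := by
      ext v
      simp [eq_comm]
    have hxor (t : List ℕ) : toVec n ((r :: t).foldl (· ^^^ ·) 0) =
        toVec n r + toVec n (t.foldl (· ^^^ ·) 0) := by
      rw [List.foldl_cons, foldl_xor_eq, Nat.zero_xor, toVec_xor]
    rw [rowSpan, hset, Submodule.mem_span_insert]
    constructor
    · rintro ⟨a, z, hz, rfl⟩
      obtain ⟨t, ht, rfl⟩ := ih.1 hz
      rcases zmod_two_eq_zero_or_one a with rfl | rfl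
      · exact ⟨t, ht.cons r, by simp⟩
      · exact ⟨r :: t, ht.cons_cons r, by rw [hxor, one_smul]⟩
    · rintro ⟨t, ht, rfl⟩
      rcases List.sublist_cons_iff.1 ht with ht | ⟨t', rfl, ht'⟩
      · exact ⟨0, _, ih.2 ⟨t, ht, rfl⟩, by simp⟩
      · exact ⟨1, _, ih.2 ⟨t', ht', rfl⟩, by rw [hxor, one_smul]⟩

/-- The words `rs` form a systematic set of generators at the places `ps`: up to the order of the
rows, their restrictions to `ps` are the rows of an identity matrix. -/
def IsSystematic (ps rs : List ℕ) : Prop :=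
  (∀ r ∈ rs, weightOn ps r = 1) ∧ ∀ p ∈ ps, rs.countP (·.testBit p) = 1

instance (ps rs : List ℕ) : Decidable (IsSystematic ps rs) :=
  inferInstanceAs (Decidable (_ ∧ _))

lemma weightOn_xor (ps : List ℕ) (a b : ℕ) :
    weightOn ps (a ^^^ b) + 2 * weightOn ps (a &&& b) = weightOn ps a + weightOn ps b := by
  induction ps with
  | nil => rfl
  | cons p ps ih =>
    simp only [weightOn_eq_countP, List.countP_cons, Nat.testBit_xor, Nat.testBit_and] at ih ⊢
    cases a.testBit p <;> cases b.testBit p <;> simp <;> omega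

namespace IsSystematic

lemma perm (h : IsSystematic ps rs) (hrs : rs.Perm ls) : IsSystematic ps ls :=
  ⟨fun r hr => h.1 r (hrs.mem_iff.2 hr), fun p hp => hrs.countP_eq _ ▸ h.2 p hp⟩

lemma exists_testBit_row (h : IsSystematic ps rs) (hr : r ∈ rs) : ∃ p ∈ ps, r.testBit p :=
  List.countP_pos_iff.1 (by rw [← weightOn_eq_countP, h.1 r hr]; exact one_pos)

lemma exists_testBit_place (h : IsSystematic ps rs) (hp : p ∈ ps) : ∃ r ∈ rs, Nat.testBit r p :=
  List.countP_pos_iff.1 (Nat.lt_of_lt_of_eq one_pos (h.2 p hp).symm)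

lemma row_eq (h : IsSystematic ps rs) (hp : p ∈ ps) (hr : r ∈ rs) (hr' : r' ∈ rs)
    (hb : r.testBit p) (hb' : r'.testBit p) : r = r' := by
  have hone := h.2 p hp
  rw [List.countP_eq_length_filter, List.length_eq_one_iff] at hone
  obtain ⟨s, hs⟩ := hone
  have mem_iff (r : ℕ) : r ∈ rs ∧ r.testBit p ↔ r = s := by
    simpa [hs] using (List.mem_filter (p := (·.testBit p)) (as := rs) (x := r)).symm
  exact ((mem_iff r).1 ⟨hr, hb⟩).trans ((mem_iff r').1 ⟨hr', hb'⟩).symm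

lemma place_eq (h : IsSystematic ps rs) (hr : r ∈ rs) {q : ℕ} (hp : p ∈ ps) (hq : q ∈ ps)
    (hb : r.testBit p) (hb' : r.testBit q) : p = q := by
  have hone := h.1 r hr
  rw [weightOn_eq_countP, List.countP_eq_length_filter, List.length_eq_one_iff] at hone
  obtain ⟨s, hs⟩ := hone
  have mem_iff (p : ℕ) : p ∈ ps ∧ r.testBit p ↔ p = s := by
    simpa [hs] using (List.mem_filter (p := (r.testBit ·)) (as := ps) (x := p)).symm
  exact ((mem_iff p).1 ⟨hp, hb⟩).trans ((mem_iff q).1 ⟨hq, hb'⟩).symm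

lemma nodup (h : IsSystematic ps rs) : rs.Nodup := by
  refine List.nodup_iff_count_le_one.2 fun r => ?_
  by_cases hr : r ∈ rs
  · obtain ⟨p, hp, hb⟩ := h.exists_testBit_row hr
    rw [← h.2 p hp]
    exact List.countP_mono_left fun s _ hs => by rwa [eq_of_beq hs]
  · simp [List.count_eq_zero_of_not_mem hr]

lemma exists_mem_rowSpan_eqOn (h : IsSystematic ps rs) (v : Fin n → ZMod 2) :
    ∃ u ∈ rowSpan n rs, ∀ i : Fin n, (i : ℕ) ∈ ps → u i = v i := by
  have hunit (i : Fin n) (hi : (i : ℕ) ∈ ps) : ∃ r ∈ rs, r.testBit i := h.exists_testBit_place hi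
  choose! r hr hbit using hunit
  refine ⟨∑ i with Fin.val i ∈ ps, v i • toVec n (r i),
    Submodule.sum_mem _ fun i hi => Submodule.smul_mem _ _
      (toVec_mem_rowSpan (hr i (Finset.mem_filter.1 hi).2)), fun j hj => ?_⟩
  have hdelta (i : Fin n) (hi : (i : ℕ) ∈ ps) : toVec n (r i) j = if i = j then 1 else 0 := by
    split_ifs with hij
    · exact toVec_apply_eq_one.2 (hij ▸ hbit i hi)
    · refine toVec_apply_eq_zero.2 (Bool.eq_false_iff.2 fun hb => hij ?_)
      exact Fin.ext (h.place_eq (hr i hi) hi hj (hbit i hi) hb)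
  rw [Finset.sum_apply]
  calc ∑ i with Fin.val i ∈ ps, (v i • toVec n (r i)) j
      = ∑ i with Fin.val i ∈ ps, if i = j then v i else 0 := by
        refine Finset.sum_congr rfl fun i hi => ?_
        simp [hdelta i (Finset.mem_filter.1 hi).2]
    _ = v j := by simp [Finset.sum_ite_eq', hj]

lemma mem_rowSpan_of_dotProduct_eq_zero (hps : IsSystematic ps rs) (hqs : IsSystematic qs ls)
    (hcover : ∀ i < n, i ∈ ps ∨ i ∈ qs)
    (horth : ∀ x ∈ rowSpan n rs, ∀ y ∈ rowSpan n ls, x ⬝ᵥ y = 0) {v : Fin n → ZMod 2}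
    (hv : ∀ y ∈ rowSpan n ls, v ⬝ᵥ y = 0) : v ∈ rowSpan n rs := by
  obtain ⟨u, hu, huv⟩ := hps.exists_mem_rowSpan_eqOn v
  suffices h : u = v from h ▸ hu
  ext j
  by_cases hj : (j : ℕ) ∈ ps
  · exact huv j hj
  -- `v - u` vanishes on `ps`, so pairing it with the generator that is a unit vector on `qs`
  -- reads off its entry at `j`.
  obtain ⟨e, he, hej⟩ := hqs.exists_mem_rowSpan_eqOn (Pi.single j 1)
  have hentry : (v - u) ⬝ᵥ e = (v - u) j := by
    rw [dotProduct, Finset.sum_eq_single j, hej j ((hcover j j.2).resolve_left hj)]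
    · simp
    · intro i _ hij
      rcases hcover i i.2 with hi | hi
      · simp [huv i hi]
      · simp [hej i hi, hij]
    · simp
  rw [sub_dotProduct, hv e he, horth u hu e he, sub_zero, Pi.sub_apply] at hentry
  exact (sub_eq_zero.1 hentry.symm).symm

lemma testBit_foldl_xor (h : IsSystematic ps rs) (ht : t.Sublist rs) (hp : p ∈ ps) :
    (t.foldl (· ^^^ ·) 0).testBit p ↔ ∃ r ∈ t, r.testBit p := by
  induction t with
  | nil => simp
  | cons r t ih =>
    have hnot (hr : r.testBit p) : ¬ ∃ s ∈ t, s.testBit p := by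
      rintro ⟨s, hs, hsp⟩
      have hrs := h.row_eq hp (ht.subset List.mem_cons_self)
        (ht.subset (List.mem_cons_of_mem r hs)) hr hsp
      exact (List.nodup_cons.1 (h.nodup.sublist ht)).1 (hrs ▸ hs)
    have ih := ih (List.sublist_of_cons_sublist ht)
    rw [List.foldl_cons, foldl_xor_eq, Nat.zero_xor, Nat.testBit_xor, List.exists_mem_cons_iff,
      ← ih]
    rw [← ih] at hnot
    cases hr : r.testBit p
    · simp
    · simpa [hr] using hnot

lemma weightOn_foldl_xor (h : IsSystematic ps rs) (ht : t.Sublist rs) :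
    weightOn ps (t.foldl (· ^^^ ·) 0) = t.length := by
  induction t with
  | nil => simp [weightOn_eq_countP]
  | cons r t ih =>
    have ht' := List.sublist_of_cons_sublist ht
    have hdisjoint : weightOn ps (r &&& t.foldl (· ^^^ ·) 0) = 0 := by
      rw [weightOn_eq_countP]
      refine List.countP_eq_zero.2 fun p hp hb => ?_
      rw [Nat.testBit_and, Bool.and_eq_true, h.testBit_foldl_xor ht' hp] at hb
      obtain ⟨hr, s, hs, hsp⟩ := hb
      have hrs := h.row_eq hp (ht.subset List.mem_cons_self)
        (ht.subset (List.mem_cons_of_mem r hs)) hr hsp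
      exact (List.nodup_cons.1 (h.nodup.sublist ht)).1 (hrs ▸ hs)
    have hxor := weightOn_xor ps r (t.foldl (· ^^^ ·) 0)
    rw [hdisjoint, h.1 r (ht.subset List.mem_cons_self), ih ht'] at hxor
    rw [List.foldl_cons, foldl_xor_eq, Nat.zero_xor, List.length_cons]
    omega

lemma foldl_xor_injective (h : IsSystematic ps rs) (ht : t.Sublist rs) (ht' : t'.Sublist rs)
    (heq : t.foldl (· ^^^ ·) 0 = t'.foldl (· ^^^ ·) 0) : t = t' := by
  have hmem {t : List ℕ} (ht : t.Sublist rs) {r p : ℕ} (hr : r ∈ rs) (hp : p ∈ ps)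
      (hb : r.testBit p) : r ∈ t ↔ (t.foldl (· ^^^ ·) 0).testBit p := by
    rw [h.testBit_foldl_xor ht hp]
    exact ⟨fun hrt => ⟨r, hrt, hb⟩,
      fun ⟨s, hs, hsp⟩ => h.row_eq hp hr (ht.subset hs) hb hsp ▸ hs⟩
  have hfilter {t : List ℕ} (ht : t.Sublist rs) : rs.filter (· ∈ t) = t := by
    have hsub : t.Sublist (rs.filter (· ∈ t)) := by
      have hself : t.filter (· ∈ t) = t := List.filter_eq_self.2 fun _ hr => decide_eq_true hr
      simpa only [hself] using ht.filter (· ∈ t)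
    refine (hsub.eq_of_length_le ?_).symm
    exact ((h.nodup.filter _).subperm fun r hr => by simpa using (List.mem_filter.1 hr).2).length_le
  rw [← hfilter ht, ← hfilter ht']
  refine List.filter_congr fun r hr => ?_
  obtain ⟨p, hp, hb⟩ := h.exists_testBit_row hr
  simp only [hmem ht hr hp hb, hmem ht' hr hp hb, heq]

end IsSystematic

end Systematic

/-! ### Counting ones in encoded lists -/

section Lanes

/-- The digits number `j` of the words of an encoded list, each padded to a lane of 80 digits; they
are extracted with the number whose digits in base `2 ^ 80` are all one. -/
def lanes (W : ℕ × ℕ) (j : ℕ) : ℕ :=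
  (W.1.shiftRight j).land (((Nat.shiftLeft 1 (Nat.mul 80 W.2)).sub 1).div 1208925819614629174706175)

/-- The sum over `l < 80` of the fourth powers of the numbers of words with ones at `z` and `l`.
Sums of base `2 ^ 80` digits are computed modulo `2 ^ 80 - 1 = 1208925819614629174706175`. -/
noncomputable def profile (W : ℕ × ℕ) (z : ℕ) : ℕ :=
  List.rec 0
    (fun l _ s => Nat.add
      (Nat.pow (((lanes W z).land (lanes W l)).mod 1208925819614629174706175) 4) s)
    (List.range 80)

lemma land_two_pow_mul_add {a c b d : ℕ} {k : ℕ} (hb : b < 2 ^ k) (hd : d < 2 ^ k) :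
    (b + 2 ^ k * a) &&& (d + 2 ^ k * c) = (b &&& d) + 2 ^ k * (a &&& c) := by
  refine Nat.eq_of_testBit_eq fun i => ?_
  have hbd : b &&& d < 2 ^ k := Nat.and_lt_two_pow b hd
  simp only [add_comm _ (2 ^ k * _), Nat.testBit_and, Nat.testBit_two_pow_mul_add _ hb,
    Nat.testBit_two_pow_mul_add _ hd, Nat.testBit_two_pow_mul_add _ hbd]
  split_ifs <;> rfl

lemma two_pow_sub_one_div_succ (n : ℕ) :
    (2 ^ (80 * (n + 1)) - 1) / (2 ^ 80 - 1) = 1 + 2 ^ 80 * ((2 ^ (80 * n) - 1) / (2 ^ 80 - 1)) := by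
  have hone : 1 ≤ (2 ^ 80) ^ n := Nat.one_le_two_pow.trans_eq (pow_mul _ _ _)
  obtain ⟨m, hm⟩ : (2 ^ 80 - 1) ∣ (2 ^ 80) ^ n - 1 := by
    simpa only [one_pow] using Nat.sub_dvd_pow_sub_pow (2 ^ 80) 1 n
  rw [pow_mul, pow_mul, hm, pow_succ, Nat.mul_div_cancel_left m (by norm_num)]
  refine Nat.div_eq_of_eq_mul_right (by norm_num) ?_
  omega

lemma lanes_encode {W : List ℕ} (hW : ∀ w ∈ W, w < 2 ^ 80) {j : ℕ} (hj : j < 80) :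
    lanes (encode W) j = Nat.ofDigits (2 ^ 80) (W.map fun w => (w.testBit j).toNat) := by
  have hlanes (L : List ℕ) : lanes (encode L) j =
      Nat.ofDigits (2 ^ 80) L >>> j &&& (2 ^ (80 * L.length) - 1) / (2 ^ 80 - 1) := by
    rw [← Nat.one_shiftLeft (80 * L.length)]
    rfl
  induction W with
  | nil => simp [hlanes]
  | cons w W ih =>
    rw [List.forall_mem_cons] at hW
    rw [List.map_cons, Nat.ofDigits_cons, ← ih hW.2, hlanes, hlanes, List.length_cons,
      two_pow_sub_one_div_succ, Nat.ofDigits_cons]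
    set N := Nat.ofDigits (2 ^ 80) W
    set O := (2 ^ (80 * W.length) - 1) / (2 ^ 80 - 1)
    refine Nat.eq_of_testBit_eq fun i => ?_
    have hbit : (w.testBit j).toNat < 2 ^ 80 := (Bool.toNat_le _).trans_lt (by norm_num)
    simp only [add_comm _ (2 ^ 80 * _), Nat.testBit_and, Nat.testBit_shiftRight,
      Nat.testBit_two_pow_mul_add _ hW.1, Nat.testBit_two_pow_mul_add _ hbit,
      Nat.testBit_two_pow_mul_add _ (show 1 < 2 ^ 80 by norm_num)]
    by_cases hi : i < 80
    · have hdigit (b : Bool) : b.toNat.testBit i = (decide (i = 0) && b) :=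
        Nat.testBit_bool_toNat b i
      have hone : Nat.testBit 1 i = decide (i = 0) := by simpa using hdigit true
      rw [if_pos hi, if_pos hi, hdigit, hone]
      rcases eq_or_ne i 0 with rfl | hpos
      · simp [hj]
      · simp [hpos]
    · rw [if_neg hi, if_neg hi, if_neg (by omega), Nat.add_sub_assoc (by omega)]

lemma land_ofDigits_toNat (P Q : ℕ → Bool) (W : List ℕ) :
    (Nat.ofDigits (2 ^ 80) (W.map fun w => (P w).toNat) &&&
      Nat.ofDigits (2 ^ 80) (W.map fun w => (Q w).toNat)) =
      Nat.ofDigits (2 ^ 80) (W.map fun w => (P w && Q w).toNat) := by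
  have hlt (b : Bool) : b.toNat < 2 ^ 80 := (Bool.toNat_le _).trans_lt (by norm_num)
  have hand (a b : Bool) : a.toNat &&& b.toNat = (a && b).toNat := by cases a <;> cases b <;> rfl
  induction W with
  | nil => simp
  | cons w W ih =>
    simp only [List.map_cons, Nat.ofDigits_cons,
      land_two_pow_mul_add (hlt _) (hlt _), ih, hand]

lemma ofDigits_toNat_mod (P : ℕ → Bool) {W : List ℕ} (hW : W.length < 2 ^ 80 - 1) :
    Nat.ofDigits (2 ^ 80) (W.map fun w => (P w).toNat) % (2 ^ 80 - 1) = W.countP P := by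
  have hsum : (W.map fun w => (P w).toNat).sum = W.countP P := by
    induction W with
    | nil => rfl
    | cons w W ih =>
      rw [List.length_cons] at hW
      rw [List.map_cons, List.sum_cons, ih (by omega), List.countP_cons]
      cases P w <;> simp [add_comm]
  have hmod := Nat.ofDigits_modEq' (2 ^ 80) 1 (2 ^ 80 - 1) (by decide)
    (W.map fun w => (P w).toNat)
  rw [Nat.ofDigits_one, hsum] at hmod
  exact Eq.trans hmod (Nat.mod_eq_of_lt (List.countP_le_length.trans_lt hW))

lemma profile_encode {W : List ℕ} (hW : ∀ w ∈ W, w < 2 ^ 80) (hlen : W.length < 2 ^ 80 - 1)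
    {z : ℕ} (hz : z < 80) :
    profile (encode W) z =
      ∑ l : Fin 80, W.countP (fun w => w.testBit z && w.testBit l) ^ 4 := by
  have hcount {l : ℕ} (hl : l < 80) :
      ((lanes (encode W) z).land (lanes (encode W) l)).mod 1208925819614629174706175 =
        W.countP fun w => w.testBit z && w.testBit l := by
    rw [lanes_encode hW hz, lanes_encode hW hl, ← ofDigits_toNat_mod _ hlen, ← land_ofDigits_toNat]
    rfl
  have hrec : ∀ L : List ℕ, (∀ l ∈ L, l < 80) →
      (List.rec 0 (fun l _ s => Nat.add (Nat.pow (((lanes (encode W) z).land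
        (lanes (encode W) l)).mod 1208925819614629174706175) 4) s) L : ℕ) =
        (L.map fun l => W.countP (fun w => w.testBit z && w.testBit l) ^ 4).sum := by
    intro L hL
    induction L with
    | nil => rfl
    | cons l L ih =>
      rw [List.forall_mem_cons] at hL
      rw [List.map_cons, List.sum_cons, ← ih hL.2, ← hcount hL.1]
      rfl
  rw [profile, hrec _ fun l => List.mem_range.1, Fin.sum_univ_eq_sum_range
    (fun l => W.countP (fun w => w.testBit z && w.testBit l) ^ 4)]
  rfl

end Lanes

/-! ### Words of weight 16 -/

section WeightSixteen

variable {ps qs rs t as bs W : List ℕ} {a b m x y w : ℕ}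

lemma weightOn_append (ps qs : List ℕ) (w : ℕ) :
    weightOn (ps ++ qs) w = weightOn ps w + weightOn qs w := by
  simp only [weightOn_eq_countP, List.countP_append]

lemma wt_toVec_eighty (w : ℕ) :
    wt (toVec 80 w) = weightOn (List.range 40) w + weightOn (List.range' 40 40) w := by
  rw [wt_toVec, ← weightOn_append]
  rfl

lemma toVec_eighty_injOn {w w' : ℕ} (hw : w < 2 ^ 80) (hw' : w' < 2 ^ 80)
    (h : toVec 80 w = toVec 80 w') : w = w' := by
  refine Nat.eq_of_testBit_eq fun i => ?_
  by_cases hi : i < 80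
  · have := congrFun h ⟨i, hi⟩
    rw [Bool.eq_iff_iff, ← toVec_apply_eq_one (i := ⟨i, hi⟩), this, toVec_apply_eq_one]
  · have hpow : 2 ^ 80 ≤ 2 ^ i := Nat.pow_le_pow_right two_pos (not_lt.1 hi)
    rw [Nat.testBit_lt_two_pow (hw.trans_le hpow), Nat.testBit_lt_two_pow (hw'.trans_le hpow)]

/-- The sums of the word `a` and fewer than `m` of the words `as`, with a one at the place `y` and
with so many ones at the places `qs` that the weight is 16 if `a :: as` is systematic at the
remaining places. -/
def halfWords (qs : List ℕ) (y a : ℕ) (as : List ℕ) (m : ℕ) : List ℕ :=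
  (List.range m).flatMap fun k => (rowSums as k a).filter (Selected qs (15 - k) [y])

lemma mem_rowSums {k p : ℕ} :
    w ∈ rowSums rs k p ↔ ∃ t : List ℕ, t.Sublist rs ∧ t.length = k ∧ t.foldl (· ^^^ ·) p = w := by
  simp only [rowSums, List.mem_map, List.mem_sublistsLen, and_assoc]

lemma lt_of_mem_rowSums {k p n : ℕ} (hrs : ∀ r ∈ rs, r < 2 ^ n) (hp : p < 2 ^ n)
    (hw : w ∈ rowSums rs k p) : w < 2 ^ n := by
  obtain ⟨t, ht, -, rfl⟩ := mem_rowSums.1 hw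
  have htr : ∀ r ∈ t, r < 2 ^ n := fun r hr => hrs r (ht.subset hr)
  clear ht hw
  induction t generalizing p with
  | nil => exact hp
  | cons r t ih =>
    rw [List.forall_mem_cons] at htr
    exact ih (Nat.xor_lt_two_pow hp htr.1) htr.2

lemma mem_halfWords : w ∈ halfWords qs y a as m ↔ ∃ t : List ℕ, t.Sublist as ∧ t.length < m ∧
    weightOn qs w = 15 - t.length ∧ w.testBit y ∧ (a :: t).foldl (· ^^^ ·) 0 = w := by
  simp only [halfWords, List.mem_flatMap, List.mem_range, List.mem_filter, mem_rowSums, Selected,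
    List.all_cons, List.all_nil, Bool.and_true, Bool.and_eq_true, beq_iff_eq, List.foldl_cons,
    Nat.zero_xor]
  constructor
  · rintro ⟨k, hk, ⟨t, ht, rfl, rfl⟩, hw, hy⟩
    exact ⟨t, ht, hk, hw, hy, rfl⟩
  · rintro ⟨t, ht, hk, hw, hy, rfl⟩
    exact ⟨t.length, hk, ⟨t, ht, rfl, rfl⟩, hw, hy⟩

lemma mem_rowSpan_of_mem_halfWords (hw : w ∈ halfWords qs y a as m) :
    toVec 80 w ∈ rowSpan 80 (a :: as) := by
  obtain ⟨t, ht, -, -, -, rfl⟩ := mem_halfWords.1 hw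
  exact mem_rowSpan.2 ⟨a :: t, ht.cons_cons a, rfl⟩

namespace IsSystematic

lemma nodup_rowSums (h : IsSystematic ps (a :: as)) (k : ℕ) : (rowSums as k a).Nodup := by
  refine ((List.nodup_sublistsLen k h.nodup.of_cons).map_on fun t ht t' ht' heq => ?_)
  have hsub {t : List ℕ} (ht : t ∈ as.sublistsLen k) : (a :: t).Sublist (a :: as) :=
    (List.mem_sublistsLen.1 ht).1.cons_cons a
  have := h.foldl_xor_injective (hsub ht) (hsub ht') (by simpa using heq)
  exact (List.cons.inj this).2

lemma weightOn_of_mem_rowSums (h : IsSystematic ps (a :: as)) {k : ℕ} (hw : w ∈ rowSums as k a) :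
    weightOn ps w = k + 1 := by
  obtain ⟨t, ht, rfl, rfl⟩ := mem_rowSums.1 hw
  simpa using h.weightOn_foldl_xor (ht.cons_cons a)

lemma nodup_halfWords (h : IsSystematic ps (a :: as)) : (halfWords qs y a as m).Nodup := by
  refine List.nodup_flatMap.2 ⟨fun k _ => (h.nodup_rowSums k).filter _, ?_⟩
  refine List.nodup_range.imp fun hne => List.disjoint_left.2 fun w hw hw' => hne ?_
  have hk := h.weightOn_of_mem_rowSums (List.mem_of_mem_filter hw)
  have hk' := h.weightOn_of_mem_rowSums (List.mem_of_mem_filter hw')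
  omega

lemma weightOn_of_mem_halfWords (h : IsSystematic ps (a :: as)) (hm : m ≤ 16)
    (hw : w ∈ halfWords qs y a as m) :
    weightOn ps w ≤ m ∧ weightOn ps w + weightOn qs w = 16 := by
  obtain ⟨t, ht, hlt, hwt, -, rfl⟩ := mem_halfWords.1 hw
  have hps := h.weightOn_foldl_xor (ht.cons_cons a)
  rw [List.length_cons] at hps
  omega

lemma testBit_of_mem_halfWords (h : IsSystematic ps (a :: as)) (hx : x ∈ ps) (ha : a.testBit x)
    (hw : w ∈ halfWords qs y a as m) : w.testBit x ∧ w.testBit y := by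
  obtain ⟨t, ht, -, -, hy, rfl⟩ := mem_halfWords.1 hw
  exact ⟨(h.testBit_foldl_xor (ht.cons_cons a) hx).2 ⟨a, List.mem_cons_self, ha⟩, hy⟩

lemma foldl_xor_mem_halfWords (h : IsSystematic ps (a :: as)) (hx : x ∈ ps) (ha : a.testBit x)
    (ht : t.Sublist (a :: as)) (hw : t.foldl (· ^^^ ·) 0 = w) (hwx : w.testBit x)
    (hwy : w.testBit y) (hm : weightOn ps w ≤ m) (hwt : weightOn ps w + weightOn qs w = 16) :
    w ∈ halfWords qs y a as m := by
  subst hw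
  obtain ⟨r, hrt, hr⟩ := (h.testBit_foldl_xor ht hx).1 hwx
  obtain rfl := h.row_eq hx (ht.subset hrt) List.mem_cons_self hr ha
  rcases List.sublist_cons_iff.1 ht with ht' | ⟨t', rfl, ht'⟩
  · exact absurd (ht'.subset hrt) (List.nodup_cons.1 h.nodup).1
  · rw [h.weightOn_foldl_xor ht, List.length_cons] at hm hwt
    exact mem_halfWords.2 ⟨t', ht', by omega, by omega, hwy, rfl⟩

end IsSystematic

/-- The words `a :: as` and `b :: bs` generate the same code of length 80, they are systematic at
the first and at the last forty places, and there `a` and `b` have their ones at `x` and `y`. -/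
structure IsFrame (x y a : ℕ) (as : List ℕ) (b : ℕ) (bs : List ℕ) : Prop where
  left : IsSystematic (List.range 40) (a :: as)
  right : IsSystematic (List.range' 40 40) (b :: bs)
  span_eq : rowSpan 80 (b :: bs) = rowSpan 80 (a :: as)
  lt_two_pow : ∀ r ∈ a :: as ++ b :: bs, r < 2 ^ 80
  mem_left : x ∈ List.range 40
  mem_right : y ∈ List.range' 40 40
  testBit_left : a.testBit x
  testBit_right : b.testBit y

/-- The words of weight 16 with ones at `x` and `y`, for `IsFrame x y a as b bs`: each of them is a
sum of at most eight of the words `a :: as` or of at most seven of the words `b :: bs`. -/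
def commonWords (x y a : ℕ) (as : List ℕ) (b : ℕ) (bs : List ℕ) : List ℕ :=
  halfWords (List.range' 40 40) y a as 8 ++ halfWords (List.range 40) x b bs 7

/-- The encoding of `commonWords x y a as b bs`, in the form in which it is computed. -/
noncomputable def scanWords (x y a : ℕ) (as : List ℕ) (b : ℕ) (bs : List ℕ) : ℕ × ℕ :=
  join
    ((List.range 8).foldr
      (fun k W => join (scan (List.range' 40 40) (15 - k) [y] as k a) W) (0, 0))
    ((List.range 7).foldr
      (fun k W => join (scan (List.range 40) (15 - k) [x] bs k b) W) (0, 0))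

lemma scanWords_eq : scanWords x y a as b bs = encode (commonWords x y a as b bs) := by
  have half (qs : List ℕ) (hqs : qs.length < 64) (y a : ℕ) (as ks : List ℕ) :
      ks.foldr (fun k W => join (scan qs (15 - k) [y] as k a) W) (0, 0) = encode
        (ks.flatMap fun k => (rowSums as k a).filter (Selected qs (15 - k) [y])) := by
    induction ks with
    | nil => rfl
    | cons k ks ih =>
      rw [List.foldr_cons, ih, scan_eq hqs (by omega), join_encode, List.flatMap_cons]
  rw [scanWords, half _ (by decide), half _ (by decide), join_encode]
  rfl

namespace IsFrame

variable (h : IsFrame x y a as b bs)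
include h

lemma of_mem_commonWords (hw : w ∈ commonWords x y a as b bs) :
    toVec 80 w ∈ rowSpan 80 (a :: as) ∧ wt (toVec 80 w) = 16 ∧ w.testBit x ∧ w.testBit y := by
  rw [wt_toVec_eighty]
  rcases List.mem_append.1 hw with hw | hw
  · exact ⟨mem_rowSpan_of_mem_halfWords hw, (h.left.weightOn_of_mem_halfWords (by decide) hw).2,
      h.left.testBit_of_mem_halfWords h.mem_left h.testBit_left hw⟩
  · rw [add_comm]
    exact ⟨h.span_eq ▸ mem_rowSpan_of_mem_halfWords hw,
      (h.right.weightOn_of_mem_halfWords (by decide) hw).2,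
      (h.right.testBit_of_mem_halfWords h.mem_right h.testBit_right hw).symm⟩

lemma exists_mem_commonWords {v : Fin 80 → ZMod 2} (hv : v ∈ rowSpan 80 (a :: as))
    (hwt : wt v = 16) {i j : Fin 80} (hx : i = x) (hy : j = y) (hi : v i = 1) (hj : v j = 1) :
    ∃ w ∈ commonWords x y a as b bs, toVec 80 w = v := by
  subst hx hy
  have hlt := List.forall_mem_append.1 h.lt_two_pow
  have lt_of_sublist {t rs : List ℕ} (hrs : ∀ r ∈ rs, r < 2 ^ 80) (ht : t.Sublist rs) :
      t.foldl (· ^^^ ·) 0 < 2 ^ 80 :=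
    lt_of_mem_rowSums hrs (by norm_num) (mem_rowSums.2 ⟨t, ht, rfl, rfl⟩)
  obtain ⟨t, ht, htv⟩ := mem_rowSpan.1 hv
  obtain ⟨t', ht', htv'⟩ := mem_rowSpan.1 (h.span_eq ▸ hv)
  have heq := toVec_eighty_injOn (lt_of_sublist hlt.2 ht') (lt_of_sublist hlt.1 ht)
    (htv'.trans htv.symm)
  generalize hw : t.foldl (· ^^^ ·) 0 = w at htv heq
  subst htv
  rw [toVec_apply_eq_one] at hi hj
  rw [wt_toVec_eighty] at hwt
  refine ⟨w, List.mem_append.2 ?_, rfl⟩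
  by_cases hle : weightOn (List.range 40) w ≤ 8
  · exact Or.inl (h.left.foldl_xor_mem_halfWords h.mem_left h.testBit_left ht hw hi hj hle hwt)
  · exact Or.inr (h.right.foldl_xor_mem_halfWords h.mem_right h.testBit_right ht' heq hj hi
      (by omega) (by omega))

lemma nodup_commonWords : (commonWords x y a as b bs).Nodup := by
  refine List.Nodup.append h.left.nodup_halfWords h.right.nodup_halfWords ?_
  refine List.disjoint_left.2 fun w hw hw' => ?_
  have hleft := h.left.weightOn_of_mem_halfWords (by decide) hw
  have hright := h.right.weightOn_of_mem_halfWords (by decide) hw'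
  omega

lemma lt_of_mem_commonWords (hw : w ∈ commonWords x y a as b bs) : w < 2 ^ 80 := by
  have hlt := h.lt_two_pow
  rw [List.forall_mem_append, List.forall_mem_cons, List.forall_mem_cons] at hlt
  obtain ⟨⟨ha, has⟩, hb, hbs⟩ := hlt
  simp only [commonWords, halfWords, List.mem_append, List.mem_flatMap, List.mem_filter] at hw
  rcases hw with ⟨k, -, hw, -⟩ | ⟨k, -, hw, -⟩
  · exact lt_of_mem_rowSums has ha hw
  · exact lt_of_mem_rowSums hbs hb hw

lemma length_commonWords_lt : (commonWords x y a as b bs).length < 2 ^ 80 - 1 := by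
  have hy : 40 ≤ y := (List.mem_range'_1.1 h.mem_right).1
  have hsub : (commonWords x y a as b bs).toFinset ⊆ Finset.Ico (2 ^ 40) (2 ^ 80) := by
    intro w hw
    rw [List.mem_toFinset] at hw
    refine Finset.mem_Ico.2 ⟨?_, h.lt_of_mem_commonWords hw⟩
    exact (Nat.pow_le_pow_right two_pos hy).trans
      (Nat.ge_two_pow_of_testBit (h.of_mem_commonWords hw).2.2.2)
  have hcard := Finset.card_le_card hsub
  rw [List.toFinset_card_of_nodup h.nodup_commonWords, Nat.card_Ico] at hcard
  exact hcard.trans_lt (by norm_num)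

end IsFrame

end WeightSixteen

/-! ### Subtraction of two coordinates -/

section Subtraction

variable {n m : ℕ}

/-- The vector with entries `x` at the first kind of coordinates and `a`, `b` at the two others. -/
def place (e : Fin n ⊕ Fin 2 ≃ Fin m) (x : Fin n → ZMod 2) (a b : ZMod 2) : Fin m → ZMod 2 :=
  Sum.elim x ![a, b] ∘ e.symm

section Place

variable (e : Fin n ⊕ Fin 2 ≃ Fin m) (x y : Fin n → ZMod 2) (a b c d : ZMod 2)

@[simp] lemma place_inl (t : Fin n) : place e x a b (e (.inl t)) = x t := by simp [place]

@[simp] lemma place_inr_zero : place e x a b (e (.inr 0)) = a := by simp [place]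

@[simp] lemma place_inr_one : place e x a b (e (.inr 1)) = b := by simp [place]

lemma sumElim_vec_comp (v : Fin m → ZMod 2) :
    Sum.elim (v ∘ e ∘ .inl) ![v (e (.inr 0)), v (e (.inr 1))] = v ∘ e := by
  ext (t | t)
  · rfl
  · fin_cases t <;> rfl

lemma place_eta (v : Fin m → ZMod 2) :
    place e (v ∘ e ∘ .inl) (v (e (.inr 0))) (v (e (.inr 1))) = v := by
  rw [place, sumElim_vec_comp, Function.comp_assoc, Equiv.self_comp_symm, Function.comp_id]

lemma exists_place (v : Fin m → ZMod 2) : ∃ x a b, place e x a b = v := ⟨_, _, _, place_eta e v⟩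

lemma place_add : place e x a b + place e y c d = place e (x + y) (a + c) (b + d) := by
  rw [← place_eta e (_ + _)]
  congr 1 <;> simp [funext_iff]

lemma place_smul : c • place e x a b = place e (c • x) (c * a) (c * b) := by
  rw [← place_eta e (_ • _)]
  congr 1 <;> simp [funext_iff]

lemma place_zero : place e 0 0 0 = 0 := place_eta e 0

lemma sum_place {M : Type*} [AddCommMonoid M] (f : Fin m → M) :
    ∑ i, f i = ∑ t, f (e (.inl t)) + (f (e (.inr 0)) + f (e (.inr 1))) := by
  rw [← Equiv.sum_comp e, Fintype.sum_sum_type, Fin.sum_univ_two]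

lemma wt_place : wt (place e x a b) = wt x + (a.val + b.val) := by
  simp only [wt_eq_sum, sum_place e, place_inl, place_inr_zero, place_inr_one]

lemma place_dotProduct_place :
    place e x a b ⬝ᵥ place e y c d = x ⬝ᵥ y + (a * c + b * d) := by
  simp only [dotProduct, sum_place e, place_inl, place_inr_zero, place_inr_one]

variable {e x} in
lemma ne_zero_of_place_ne_zero (hx : x ≠ 0) : place e x a b ≠ 0 := fun h =>
  hx (funext fun t => by rw [← place_inl e x a b t, h]; rfl)

end Place

/-- The coordinates other than `i` and `j`, followed by `i` and `j`. -/
def splitAt (i j : Fin (n + 2)) : Fin n ⊕ Fin 2 ≃ Fin (n + 2) :=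
  let e := finSumFinEquiv.trans (Equiv.swap (finSumFinEquiv (.inr 0)) i)
  e.trans (Equiv.swap (e (.inr 1)) j)

lemma splitAt_inr_one (i j : Fin (n + 2)) : splitAt i j (.inr 1) = j := by simp [splitAt]

lemma splitAt_inr_zero {i j : Fin (n + 2)} (hij : i ≠ j) : splitAt i j (.inr 0) = i := by
  set e := finSumFinEquiv.trans (Equiv.swap (finSumFinEquiv (.inr 0)) i) with he
  have hi : e (.inr 0) = i := by simp [he]
  have hne : i ≠ e (.inr 1) := fun h => by simpa using e.injective (hi.trans h)
  change Equiv.swap (e (.inr 1)) j (e (.inr 0)) = i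
  rw [hi, Equiv.swap_apply_of_ne_of_ne hne hij]

/-- The code obtained from the subcode of `D` with equal entries at the two last coordinates of
`e`, by deleting these coordinates. -/
def subtraction (D : Submodule (ZMod 2) (Fin m → ZMod 2)) (e : Fin n ⊕ Fin 2 ≃ Fin m) :
    Submodule (ZMod 2) (Fin n → ZMod 2) where
  carrier := {x | ∃ a, place e x a a ∈ D}
  zero_mem' := ⟨0, place_zero e ▸ D.zero_mem⟩
  add_mem' := by
    rintro x y ⟨a, ha⟩ ⟨b, hb⟩
    exact ⟨a + b, place_add e .. ▸ D.add_mem ha hb⟩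
  smul_mem' := by
    rintro c x ⟨a, ha⟩
    exact ⟨c * a, place_smul e .. ▸ D.smul_mem c ha⟩

section MinimumWeight

variable {D : Submodule (ZMod 2) (Fin m → ZMod 2)} {e : Fin n ⊕ Fin 2 ≃ Fin m}
variable {x : Fin n → ZMod 2}

lemma le_wt_place {d : ℕ} (hd : ∀ v ∈ D, v ≠ 0 → d + 2 ≤ wt v) {a b : ZMod 2} (hx : x ≠ 0)
    (hmem : place e x a b ∈ D) :
    d + 2 ≤ wt x + (a.val + b.val) :=
  wt_place e x a b ▸ hd _ hmem (ne_zero_of_place_ne_zero a b hx)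

lemma minWt_subtraction {d : ℕ} (hd : ∀ v ∈ D, v ≠ 0 → d + 2 ≤ wt v) (hpos : 0 < d)
    (hx : place e x 1 1 ∈ D) (hwt : wt (place e x 1 1) = d + 2) :
    minWt (subtraction D e) = d := by
  have hxd : wt x = d := Nat.add_right_cancel (wt_place e x 1 1 ▸ hwt)
  refine IsLeast.csInf_eq ⟨⟨x, ⟨1, hx⟩, hammingNorm_pos_iff.1 (hpos.trans_eq hxd.symm), hxd⟩, ?_⟩
  rintro _ ⟨y, ⟨a, ha⟩, hy, rfl⟩
  have hle := le_wt_place hd hy ha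
  have := a.val_lt
  omega

end MinimumWeight

/-- The setting in which subtraction turns the doubly even self-dual code `D` into a singly even
self-dual code. -/
structure IsSubtractable (D : Submodule (ZMod 2) (Fin m → ZMod 2)) (e : Fin n ⊕ Fin 2 ≃ Fin m) :
    Prop where
  isSelfDual : IsSelfDual D
  four_dvd_wt : ∀ v ∈ D, 4 ∣ wt v
  exists_mem : ∀ a b, ∃ x, place e x a b ∈ D

lemma finrank_of_isSelfDual {C : Submodule (ZMod 2) (Fin n → ZMod 2)} (hC : IsSelfDual C) :
    2 * Module.finrank (ZMod 2) C = n := by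
  let B : LinearMap.BilinForm (ZMod 2) (Fin n → ZMod 2) := dotProductBilin (ZMod 2) (ZMod 2)
  have hB : B.Nondegenerate :=
    ⟨fun x hx => dotProduct_eq_zero x hx,
      fun x hx => dotProduct_eq_zero x fun y => (dotProduct_comm x y).trans (hx y)⟩
  have horth : B.orthogonal C = C := by
    refine SetLike.coe_injective (Eq.trans ?_ hC.symm)
    ext x
    exact forall₂_congr fun y _ => by rw [← dotProduct, dotProduct_comm]; rfl
  have hrank := LinearMap.BilinForm.finrank_orthogonal hB C
  have hle := Submodule.finrank_le C
  rw [horth, Module.finrank_fin_fun] at hrank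
  rw [Module.finrank_fin_fun] at hle
  omega

namespace IsSubtractable

variable {D : Submodule (ZMod 2) (Fin m → ZMod 2)} {e : Fin n ⊕ Fin 2 ≃ Fin m}
variable (h : IsSubtractable D e) {x : Fin n → ZMod 2}
include h

lemma dotProduct_eq_zero {v w : Fin m → ZMod 2} (hv : v ∈ D) (hw : w ∈ D) : v ⬝ᵥ w = 0 :=
  h.isSelfDual.subset hv w hw

lemma place_mem_iff (a : ZMod 2) :
    place e x a a ∈ D ↔ x ∈ subtraction D e ∧ 4 ∣ wt x + (a.val + a.val) := by
  refine ⟨fun hx => ⟨⟨a, hx⟩, wt_place e x a a ▸ h.four_dvd_wt _ hx⟩, ?_⟩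
  rintro ⟨⟨b, hb⟩, ha⟩
  have hwt := h.four_dvd_wt _ hb
  rw [wt_place] at hwt
  obtain rfl : a = b := by
    rcases zmod_two_eq_zero_or_one a with rfl | rfl <;>
      rcases zmod_two_eq_zero_or_one b with rfl | rfl <;>
      first | rfl | (simp only [ZMod.val_zero, ZMod.val_one] at ha hwt; omega)
  exact hb

lemma mem_evenSub_iff : x ∈ evenSub (subtraction D e) ↔ place e x 0 0 ∈ D :=
  (h.place_mem_iff 0).symm

lemma exists_place_mem (hx : x ∈ dualSet (evenSub (subtraction D e))) :
    ∃ a b, place e x a b ∈ D := by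
  obtain ⟨u, hu⟩ := h.exists_mem 1 0
  obtain ⟨w, hw⟩ := h.exists_mem 0 1
  refine ⟨x ⬝ᵥ u, x ⬝ᵥ w, h.isSelfDual.superset fun v hv => ?_⟩
  obtain ⟨y, a, b, rfl⟩ := exists_place e v
  have hmem := D.add_mem (D.add_mem hv (D.smul_mem a hu)) (D.smul_mem b hw)
  simp only [place_smul, place_add, mul_one, mul_zero, add_zero, CharTwo.add_self_eq_zero] at hmem
  have hzero : x ⬝ᵥ (y + a • u + b • w) = 0 := hx _ (h.mem_evenSub_iff.2 hmem)
  rw [dotProduct_add, dotProduct_add, dotProduct_smul, dotProduct_smul, smul_eq_mul,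
    smul_eq_mul] at hzero
  change place e x _ _ ⬝ᵥ place e y a b = 0
  rw [place_dotProduct_place, ← hzero]
  ring

lemma isSelfDual_subtraction : IsSelfDual (subtraction D e) := by
  refine Set.Subset.antisymm ?_ fun x hx => ?_
  · rintro x ⟨a, ha⟩ y ⟨b, hb⟩
    have hdot := h.dotProduct_eq_zero ha hb
    rwa [place_dotProduct_place, CharTwo.add_self_eq_zero, add_zero] at hdot
  · obtain ⟨a, b, hab⟩ := h.exists_place_mem fun y hy => hx y hy.1
    obtain ⟨t, ht⟩ := h.exists_mem 1 1
    have hdot := h.dotProduct_eq_zero hab ht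
    rw [place_dotProduct_place, show x ⬝ᵥ t = 0 from hx t ⟨1, ht⟩, zero_add, mul_one, mul_one,
      CharTwo.add_eq_zero] at hdot
    exact ⟨a, hdot ▸ hab⟩

lemma mem_shadow_iff :
    x ∈ shadow (subtraction D e) ↔ place e x 1 0 ∈ D ∨ place e x 0 1 ∈ D := by
  constructor
  · rintro ⟨hx, hxC⟩
    obtain ⟨a, b, hab⟩ := h.exists_place_mem hx
    have hne : a ≠ b := by rintro rfl; exact hxC ⟨a, hab⟩
    rcases zmod_two_eq_zero_or_one a with rfl | rfl <;>
      rcases zmod_two_eq_zero_or_one b with rfl | rfl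
    · exact absurd rfl hne
    · exact Or.inr hab
    · exact Or.inl hab
    · exact absurd rfl hne
  · intro hx
    obtain ⟨a, b, hab, hval⟩ : ∃ a b : ZMod 2, place e x a b ∈ D ∧ a.val + b.val = 1 :=
      hx.elim (fun hx => ⟨1, 0, hx, rfl⟩) fun hx => ⟨0, 1, hx, rfl⟩
    refine ⟨fun y hy => ?_, ?_⟩
    · have hdot := h.dotProduct_eq_zero hab (h.mem_evenSub_iff.1 hy)
      rwa [place_dotProduct_place, mul_zero, mul_zero, add_zero, add_zero] at hdot
    · rintro ⟨c, hc⟩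
      have hodd := h.four_dvd_wt _ hab
      have heven := h.four_dvd_wt _ hc
      rw [wt_place] at hodd heven
      omega

lemma minWtSet_shadow_subtraction {d : ℕ} (hd : ∀ v ∈ D, v ≠ 0 → d + 2 ≤ wt v)
    (hx : place e x 1 0 ∈ D) (hwt : wt (place e x 1 0) = d + 2) :
    minWtSet (shadow (subtraction D e)) = d + 1 := by
  have hxd : wt x = d + 1 := Nat.add_right_cancel (wt_place e x 1 0 ▸ hwt)
  refine IsLeast.csInf_eq ⟨⟨x, h.mem_shadow_iff.2 (Or.inl hx),
    hammingNorm_pos_iff.1 (d.succ_pos.trans_eq hxd.symm), hxd⟩, ?_⟩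
  rintro _ ⟨y, hy, hy0, rfl⟩
  rcases h.mem_shadow_iff.1 hy with hy | hy <;>
  · have hle := le_wt_place hd hy0 hy
    simp only [ZMod.val_zero, ZMod.val_one] at hle
    omega

end IsSubtractable

section Equivalence

variable {C C' : Submodule (ZMod 2) (Fin n → ZMod 2)} {σ : Equiv.Perm (Fin n)}

/-- The coordinate permutation `σ` maps the codewords of `C` to those of `C'`. -/
def IsIso (σ : Equiv.Perm (Fin n)) (C C' : Submodule (ZMod 2) (Fin n → ZMod 2)) : Prop :=
  ∀ v, v ∘ σ ∈ C' ↔ v ∈ C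

lemma IsIso.symm (h : IsIso σ C C') : IsIso σ.symm C' C := fun v => by
  rw [← h, Function.comp_assoc, Equiv.symm_comp_self, Function.comp_id]

lemma codeEquiv_iff_exists_isIso : CodeEquiv C C' ↔ ∃ σ, IsIso σ C C' := by
  constructor
  · rintro ⟨σ, rfl⟩
    refine ⟨σ, fun v => ⟨?_, fun hv => ⟨v, hv, rfl⟩⟩⟩
    rintro ⟨w, hw, hwv⟩
    rwa [← σ.surjective.injective_comp_right hwv]
  · rintro ⟨σ, h⟩
    refine ⟨σ, Submodule.ext fun v => ⟨?_, fun hv => ⟨v ∘ σ.symm, (h.symm v).2 hv, ?_⟩⟩⟩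
    · rintro ⟨w, hw, rfl⟩
      exact (h w).2 hw
    · exact funext fun t => congrArg v (σ.symm_apply_apply t)

lemma codeEquiv_symm (h : CodeEquiv C C') : CodeEquiv C' C :=
  let ⟨σ, hσ⟩ := codeEquiv_iff_exists_isIso.1 h
  codeEquiv_iff_exists_isIso.2 ⟨σ.symm, hσ.symm⟩

lemma IsIso.comp_mem_shadow (h : IsIso σ C C') {s : Fin n → ZMod 2} (hs : s ∈ shadow C) :
    s ∘ σ ∈ shadow C' := by
  refine ⟨fun y hy => ?_, fun hmem => hs.2 ((h s).1 hmem)⟩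
  have hy' : y ∘ σ.symm ∈ evenSub C := ⟨(h.symm y).2 hy.1, by rw [wt_comp]; exact hy.2⟩
  have hsum := hs.1 _ hy'
  rw [← Equiv.sum_comp σ] at hsum
  simpa only [Function.comp_apply, Equiv.symm_apply_apply] using hsum

variable {D D' : Submodule (ZMod 2) (Fin m → ZMod 2)} {e e' : Fin n ⊕ Fin 2 ≃ Fin m}

/-- The permutation of all coordinates that extends `σ` and matches the two last coordinates. -/
def extendPerm (e e' : Fin n ⊕ Fin 2 ≃ Fin m) (σ : Equiv.Perm (Fin n)) : Equiv.Perm (Fin m) :=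
  (e'.symm.trans (σ.sumCongr (Equiv.refl _))).trans e

lemma place_comp_extendPerm (x : Fin n → ZMod 2) (a b : ZMod 2) :
    place e x a b ∘ extendPerm e e' σ = place e' (x ∘ σ) a b := by
  rw [← place_eta e' (_ ∘ _)]
  congr 1 <;> simp [funext_iff, extendPerm]

lemma IsSubtractable.isIso_extendPerm (h : IsSubtractable D e) (h' : IsSubtractable D' e')
    (hσ : IsIso σ (subtraction D e) (subtraction D' e')) {u : Fin n → ZMod 2}
    (hu : place e u 1 0 ∈ D) (hu' : place e' (u ∘ σ) 1 0 ∈ D') :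
    IsIso (extendPerm e e' σ) D D' := by
  have heq (x : Fin n → ZMod 2) (a : ZMod 2) :
      place e' (x ∘ σ) a a ∈ D' ↔ place e x a a ∈ D := by
    rw [h.place_mem_iff, h'.place_mem_iff, hσ, wt_comp]
  have hne (x : Fin n → ZMod 2) (a b : ZMod 2) (hab : a + 1 = b) :
      place e' (x ∘ σ) a b ∈ D' ↔ place e x a b ∈ D := by
    rw [← D.add_mem_iff_left hu, ← D'.add_mem_iff_left hu', place_add, place_add, add_zero, hab]
    exact heq (x + u) b
  intro v
  obtain ⟨x, a, b, rfl⟩ := exists_place e v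
  rw [place_comp_extendPerm]
  by_cases hab : a = b
  · exact hab ▸ heq x a
  · exact hne x a b (by revert a b; decide)

/-- The splitting of the coordinates with the two last ones interchanged. -/
def swapLast (e : Fin n ⊕ Fin 2 ≃ Fin m) : Fin n ⊕ Fin 2 ≃ Fin m :=
  ((Equiv.refl _).sumCongr (Equiv.swap 0 1)).trans e

lemma place_swapLast (e : Fin n ⊕ Fin 2 ≃ Fin m) (x : Fin n → ZMod 2) (a b : ZMod 2) :
    place (swapLast e) x a b = place e x b a := by
  rw [← place_eta e (place (swapLast e) x a b)]
  congr 1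
  · ext t
    exact place_inl (swapLast e) x a b t
  · exact place_inr_one (swapLast e) x a b
  · exact place_inr_zero (swapLast e) x a b

lemma subtraction_swapLast : subtraction D (swapLast e) = subtraction D e := by
  ext x
  simp only [subtraction, Submodule.mem_mk, place_swapLast]

lemma IsSubtractable.swapLast (h : IsSubtractable D e) : IsSubtractable D (swapLast e) where
  isSelfDual := h.isSelfDual
  four_dvd_wt := h.four_dvd_wt
  exists_mem a b := by simpa only [place_swapLast] using h.exists_mem b a

lemma IsSubtractable.exists_isIso (h : IsSubtractable D e) (h' : IsSubtractable D' e')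
    (hC : CodeEquiv (subtraction D e) (subtraction D' e')) :
    ∃ ρ, IsIso ρ D D' ∧
      (ρ (e' (.inr 0)) = e (.inr 0) ∧ ρ (e' (.inr 1)) = e (.inr 1) ∨
        ρ (e' (.inr 0)) = e (.inr 1) ∧ ρ (e' (.inr 1)) = e (.inr 0)) := by
  obtain ⟨σ, hσ⟩ := codeEquiv_iff_exists_isIso.1 hC
  obtain ⟨u, hu⟩ := h.exists_mem 1 0
  rcases h'.mem_shadow_iff.1 (hσ.comp_mem_shadow (h.mem_shadow_iff.2 (Or.inl hu))) with hu' | hu'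
  · refine ⟨_, h.isIso_extendPerm h' hσ hu hu', Or.inl ?_⟩
    simp [extendPerm]
  · rw [← subtraction_swapLast (e := e')] at hσ
    rw [← place_swapLast] at hu'
    refine ⟨_, h.isIso_extendPerm h'.swapLast hσ hu hu', Or.inr ?_⟩
    simp [extendPerm, SExtremal78.swapLast]

end Equivalence

end Subtraction

/-! ### Quasi-cyclic codes of length 80 -/

section QuasiCyclic

/-- The cyclic shift of each of the four blocks of twenty coordinates. -/
def blockRotation : Equiv.Perm (Fin 80) where
  toFun i := if i.val % 20 = 0 then i + 19 else i - 1
  invFun i := if i.val % 20 = 19 then i - 19 else i + 1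
  left_inv := by decide
  right_inv := by decide

/-- The cyclic shift of each of the four blocks of twenty digits of a word: the first mask consists
of the digits that stay in their block, the second one of the first digits of the blocks. -/
def rotate (w : ℕ) : ℕ :=
  ((w &&& 0x7ffff7ffff7ffff7ffff) <<< 1) ||| ((w >>> 19) &&& 0x00001000010000100001)

/-- The words obtained from `a` and `b` by cyclic shifts of the blocks. -/
def rows (a b : ℕ) : List ℕ := List.iterate rotate a 20 ++ List.iterate rotate b 20

variable {a b r w : ℕ}

lemma blockRotation_pow_twenty : blockRotation ^ 20 = 1 := by decide +kernel

lemma toVec_rotate (w : ℕ) : toVec 80 (rotate w) = toVec 80 w ∘ blockRotation := by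
  ext i
  have hshift : Nat.testBit 0x7ffff7ffff7ffff7ffff (i - 1) = decide (i.val % 20 ≠ 0) ∨ i = 0 := by
    decide +kernel +revert
  have hwrap : Nat.testBit 0x00001000010000100001 i = decide (i.val % 20 = 0) := by
    decide +kernel +revert
  have hrot : (blockRotation i : ℕ) = if i.val % 20 = 0 then 19 + i.val else i - 1 := by
    decide +kernel +revert
  have hpos : i.val % 20 ≠ 0 → 1 ≤ i.val := by omega
  simp only [toVec, rotate, Function.comp_apply, Nat.testBit_or, Nat.testBit_shiftLeft,
    Nat.testBit_shiftRight, Nat.testBit_and, hwrap, hrot]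
  by_cases hi : i.val % 20 = 0
  · rcases hshift with hshift | rfl
    · simp [hi, hshift]
    · simp
  · rcases hshift with hshift | rfl
    · simp [hi, hshift, hpos hi]
    · simp at hi

lemma toVec_iterate_rotate (s w : ℕ) :
    toVec 80 (rotate^[s] w) = toVec 80 w ∘ (blockRotation ^ s : Equiv.Perm (Fin 80)) := by
  induction s with
  | zero => rfl
  | succ s ih =>
    rw [Function.iterate_succ_apply', toVec_rotate, ih, pow_succ, Equiv.Perm.coe_mul,
      Function.comp_assoc]

lemma mem_rows : r ∈ rows a b ↔ ∃ s < 20, ∃ g ∈ [a, b], r = rotate^[s] g := by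
  simp only [rows, List.mem_append, List.mem_iterate, List.mem_cons, List.not_mem_nil, or_false,
    exists_eq_or_imp, exists_eq_left, ← exists_or, ← and_or_left]

lemma rows_perm : (rows a b).Perm (rows b a) := List.perm_append_comm

lemma exists_mem_rows_comp (hr : r ∈ rows a b) (k : ℕ) :
    ∃ r' ∈ rows a b, toVec 80 r' = toVec 80 r ∘ (blockRotation ^ k : Equiv.Perm (Fin 80)) := by
  obtain ⟨s, -, g, hg, rfl⟩ := mem_rows.1 hr
  refine ⟨_, mem_rows.2 ⟨(s + k) % 20, Nat.mod_lt _ (by norm_num), g, hg, rfl⟩, ?_⟩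
  rw [toVec_iterate_rotate, toVec_iterate_rotate, ← pow_eq_pow_mod _ blockRotation_pow_twenty,
    pow_add, Equiv.Perm.coe_mul, Function.comp_assoc]

lemma comp_mem_rowSpan {v : Fin 80 → ZMod 2} (hv : v ∈ rowSpan 80 (rows a b)) (k : ℕ) :
    v ∘ (blockRotation ^ k : Equiv.Perm (Fin 80)) ∈ rowSpan 80 (rows a b) := by
  have hle : rowSpan 80 (rows a b) ≤ (rowSpan 80 (rows a b)).comap
      (LinearMap.funLeft (ZMod 2) (ZMod 2) (blockRotation ^ k : Equiv.Perm (Fin 80))) := by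
    refine Submodule.span_le.2 ?_
    rintro _ ⟨r, hr, rfl⟩
    obtain ⟨r', hr', heq⟩ := exists_mem_rows_comp hr k
    rw [SetLike.mem_coe, Submodule.mem_comap, LinearMap.funLeft, LinearMap.coe_mk, AddHom.coe_mk,
      ← heq]
    exact toVec_mem_rowSpan hr'
  exact hle hv

lemma isIso_blockRotation_pow (k : ℕ) :
    IsIso (blockRotation ^ k) (rowSpan 80 (rows a b)) (rowSpan 80 (rows a b)) := by
  refine fun v => ⟨fun hv => ?_, fun hv => comp_mem_rowSpan hv k⟩
  have hback := comp_mem_rowSpan hv (19 * k)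
  rwa [Function.comp_assoc, ← Equiv.Perm.coe_mul, ← pow_add, ← one_add_mul, pow_mul,
    blockRotation_pow_twenty, one_pow, Equiv.Perm.coe_one, Function.comp_id] at hback

lemma exists_blockRotation_pow_mem (i : Fin 80) :
    ∃ k < 20, (blockRotation ^ k) i ∈ [0, 20, 40, 60] := by
  decide +kernel +revert

/-- Generators of a quasi-cyclic code of length 80 with two kinds of rows; their shifts are meant to
be systematic at the first forty coordinates for `left₀`, `left₁`, and at the last forty ones for
`right₀`, `right₁`. -/
structure Generators where
  left₀ : ℕ
  left₁ : ℕ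
  right₀ : ℕ
  right₁ : ℕ

namespace Generators

/-- The generator words themselves. -/
def words (c : Generators) : List ℕ := [c.left₀, c.left₁, c.right₀, c.right₁]

/-- The rows of a generator matrix that is systematic at the first forty coordinates. -/
def leftRows (c : Generators) : List ℕ := rows c.left₀ c.left₁

/-- The rows of a generator matrix that is systematic at the last forty coordinates. -/
def rightRows (c : Generators) : List ℕ := rows c.right₀ c.right₁

/-- The code of length 80 generated by the shifts of `left₀` and `left₁`. -/
def code (c : Generators) : Submodule (ZMod 2) (Fin 80 → ZMod 2) := rowSpan 80 c.leftRows

/-- Finitely many conditions under which `c.code` is doubly even and self-dual, and the leading ones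
of the four words are in standard position. -/
structure IsDoublyEven (c : Generators) : Prop where
  left : IsSystematic (List.range 40) c.leftRows
  right : IsSystematic (List.range' 40 40) c.rightRows
  orthogonal : ∀ g ∈ c.words, ∀ r ∈ c.leftRows ++ c.rightRows,
    2 ∣ weightOn (List.range 80) (g &&& r)
  four_dvd : ∀ g ∈ c.words, 4 ∣ weightOn (List.range 80) g
  lt_two_pow : ∀ r ∈ c.leftRows ++ c.rightRows, r < 2 ^ 80
  leading : c.left₀.testBit 0 ∧ c.left₁.testBit 20 ∧ c.right₀.testBit 40 ∧ c.right₁.testBit 60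

variable {c : Generators} {r r' : ℕ}

lemma exists_iterate_rotate (hr : r ∈ c.leftRows ++ c.rightRows) :
    ∃ s < 20, ∃ g ∈ c.words, r = rotate^[s] g := by
  rcases List.mem_append.1 hr with hr | hr <;>
  · obtain ⟨s, hs, g, hg, rfl⟩ := mem_rows.1 hr
    exact ⟨s, hs, g, by simp only [words, List.mem_cons] at hg ⊢; tauto, rfl⟩

namespace IsDoublyEven

variable (hc : c.IsDoublyEven)
include hc

lemma dotProduct_rows (hr : r ∈ c.leftRows ++ c.rightRows) (hr' : r' ∈ c.leftRows ++ c.rightRows) :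
    toVec 80 r ⬝ᵥ toVec 80 r' = 0 := by
  obtain ⟨s, hs, g, hg, rfl⟩ := exists_iterate_rotate hr
  have hback : (blockRotation ^ s * blockRotation ^ (20 - s) : Equiv.Perm (Fin 80)) = 1 := by
    rw [← pow_add, Nat.add_sub_cancel' hs.le, blockRotation_pow_twenty]
  obtain ⟨r'', hr'', heq⟩ : ∃ r'' ∈ c.leftRows ++ c.rightRows, toVec 80 r'' =
      toVec 80 r' ∘ (blockRotation ^ (20 - s) : Equiv.Perm (Fin 80)) := by
    simp only [List.mem_append] at hr' ⊢
    rcases hr' with hr' | hr'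
    · obtain ⟨r'', h, heq⟩ := exists_mem_rows_comp hr' (20 - s)
      exact ⟨r'', Or.inl h, heq⟩
    · obtain ⟨r'', h, heq⟩ := exists_mem_rows_comp hr' (20 - s)
      exact ⟨r'', Or.inr h, heq⟩
  rw [← comp_equiv_dotProduct_comp_equiv _ _ (blockRotation ^ (20 - s)), ← heq,
    toVec_iterate_rotate, Function.comp_assoc, ← Equiv.Perm.coe_mul, hback, Equiv.Perm.coe_one,
    Function.comp_id]
  exact toVec_dotProduct_eq_zero (hc.orthogonal g hg r'' hr'')

lemma dotProduct_rowSpan {rs ls : List ℕ} (hrs : rs ⊆ c.leftRows ++ c.rightRows)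
    (hls : ls ⊆ c.leftRows ++ c.rightRows) {x y : Fin 80 → ZMod 2} (hx : x ∈ rowSpan 80 rs)
    (hy : y ∈ rowSpan 80 ls) : x ⬝ᵥ y = 0 := by
  refine dotProduct_eq_zero_of_mem_span ?_ hx hy
  rintro _ ⟨r, hr, rfl⟩ _ ⟨r', hr', rfl⟩
  exact hc.dotProduct_rows (hrs hr) (hls hr')

lemma mem_code_of_dotProduct_eq_zero {v : Fin 80 → ZMod 2}
    (hv : ∀ y ∈ rowSpan 80 c.rightRows, v ⬝ᵥ y = 0) : v ∈ c.code :=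
  hc.left.mem_rowSpan_of_dotProduct_eq_zero hc.right
    (fun i hi => by simp only [List.mem_range, List.mem_range'_1]; omega)
    (fun _ hx _ hy => hc.dotProduct_rowSpan (List.subset_append_left _ _)
      (List.subset_append_right _ _) hx hy) hv

lemma rowSpan_rightRows : rowSpan 80 c.rightRows = c.code := by
  refine le_antisymm (fun v hv => ?_) fun v hv => ?_
  · exact hc.mem_code_of_dotProduct_eq_zero fun y hy =>
      hc.dotProduct_rowSpan (List.subset_append_right _ _) (List.subset_append_right _ _) hv hy
  · refine hc.right.mem_rowSpan_of_dotProduct_eq_zero hc.left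
      (fun i hi => by simp only [List.mem_range, List.mem_range'_1]; omega)
      (fun _ hx _ hy => hc.dotProduct_rowSpan (List.subset_append_right _ _)
        (List.subset_append_left _ _) hx hy) fun y hy => ?_
    exact hc.dotProduct_rowSpan (List.subset_append_left _ _) (List.subset_append_left _ _) hv hy

lemma isSelfDual : IsSelfDual c.code := by
  refine Set.Subset.antisymm (fun v hv y hy => ?_) fun v hv => ?_
  · exact hc.dotProduct_rowSpan (List.subset_append_left _ _) (List.subset_append_left _ _) hv hy
  · exact hc.mem_code_of_dotProduct_eq_zero fun y hy => hv y (hc.rowSpan_rightRows ▸ hy)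

lemma four_dvd_wt {v : Fin 80 → ZMod 2} (hv : v ∈ c.code) : 4 ∣ wt v := by
  refine four_dvd_wt_of_mem_span ?_ ?_ hv
  · rintro _ ⟨r, hr, rfl⟩ _ ⟨r', hr', rfl⟩
    exact hc.dotProduct_rows (List.mem_append_left _ hr) (List.mem_append_left _ hr')
  · rintro _ ⟨r, hr, rfl⟩
    obtain ⟨s, -, g, hg, rfl⟩ := exists_iterate_rotate (List.mem_append_left _ hr)
    rw [toVec_iterate_rotate, wt_comp, wt_toVec]
    exact hc.four_dvd g hg

lemma toVec_mem_code {w : ℕ} (hw : ∀ r ∈ c.rightRows, 2 ∣ weightOn (List.range 80) (w &&& r)) :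
    toVec 80 w ∈ c.code := by
  refine hc.mem_code_of_dotProduct_eq_zero fun y hy => ?_
  refine dotProduct_eq_zero_of_mem_span (S := {toVec 80 w}) ?_
    (Submodule.mem_span_singleton_self _) hy
  rintro _ rfl _ ⟨r, hr, rfl⟩
  exact toVec_dotProduct_eq_zero (hw r hr)

end IsDoublyEven
end Generators
end QuasiCyclic

/-! ### Minimum weight and invariants of the codes of length 80 -/

section Invariants

/-- No sum of words from `rs` has weight 4, 8 or 12 if it has at most half of its weight at the
places where `rs` is systematic and the rest of it at `ps`. -/
def NoLightSums (ps rs : List ℕ) : Prop :=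
  ∀ s ∈ [4, 8, 12], ∀ a ∈ List.range' 1 (s / 2), scan ps (s - a) [] rs a 0 = (0, 0)

noncomputable instance (ps rs : List ℕ) : Decidable (NoLightSums ps rs) := by
  unfold NoLightSums
  infer_instance

lemma NoLightSums.lt_two_mul_weightOn {ps qs rs t : List ℕ} {s : ℕ} (h : NoLightSums ps rs)
    (hps : ps.length < 64) (hqs : IsSystematic qs rs) (ht : t.Sublist rs) (hne : t ≠ [])
    (hs : s ∈ [4, 8, 12])
    (hwt : weightOn qs (t.foldl (· ^^^ ·) 0) + weightOn ps (t.foldl (· ^^^ ·) 0) = s) :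
    s < 2 * weightOn qs (t.foldl (· ^^^ ·) 0) := by
  have hpos := List.length_pos_iff.2 hne
  have hle : s ≤ 12 := by revert s; simp
  rw [hqs.weightOn_foldl_xor ht] at hwt ⊢
  by_contra! hlt
  have hempty := h s hs t.length (List.mem_range'_1.2 (by omega))
  rw [scan_eq hps (by omega)] at hempty
  have hnil := List.eq_nil_of_length_eq_zero (congrArg Prod.snd hempty)
  refine List.filter_eq_nil_iff.1 hnil _ (mem_rowSums.2 ⟨t, ht, rfl, rfl⟩) ?_
  simp only [Selected, List.all_nil, Bool.and_true, beq_iff_eq]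
  omega

lemma Generators.IsDoublyEven.sixteen_le_wt {c : Generators} (hc : c.IsDoublyEven)
    (hleft : NoLightSums (List.range' 40 40) c.leftRows)
    (hright : NoLightSums (List.range 40) c.rightRows) {v : Fin 80 → ZMod 2} (hv : v ∈ c.code)
    (hne : v ≠ 0) : 16 ≤ wt v := by
  obtain ⟨t, ht, htv⟩ := mem_rowSpan.1 hv
  obtain ⟨t', ht', htv'⟩ := mem_rowSpan.1 (hc.rowSpan_rightRows.symm ▸ hv)
  have hnil : t ≠ [] := by rintro rfl; exact hne (by simpa using htv.symm)
  have hnil' : t' ≠ [] := by rintro rfl; exact hne (by simpa using htv'.symm)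
  have hlt {t rs : List ℕ} (hrs : rs ⊆ c.leftRows ++ c.rightRows) (ht : t.Sublist rs) :
      t.foldl (· ^^^ ·) 0 < 2 ^ 80 :=
    lt_of_mem_rowSums (fun r hr => hc.lt_two_pow r (hrs hr)) (by norm_num)
      (mem_rowSums.2 ⟨t, ht, rfl, rfl⟩)
  have heq := toVec_eighty_injOn (hlt (List.subset_append_right _ _) ht')
    (hlt (List.subset_append_left _ _) ht) (htv'.trans htv.symm)
  have hwt : wt v = weightOn (List.range 40) (t.foldl (· ^^^ ·) 0) +
      weightOn (List.range' 40 40) (t.foldl (· ^^^ ·) 0) := by rw [← htv, wt_toVec_eighty]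
  have hpos : wt v ≠ 0 := hammingNorm_ne_zero_iff.2 hne
  have hdvd := hc.four_dvd_wt hv
  by_contra! hsmall
  have hs : wt v ∈ [4, 8, 12] := by
    simp only [List.mem_cons, List.not_mem_nil, or_false]
    omega
  have hl := hleft.lt_two_mul_weightOn (by decide) hc.left ht hnil hs hwt.symm
  have hr := hright.lt_two_mul_weightOn (by decide) hc.right ht' hnil' hs
    (by rw [heq, hwt, add_comm])
  rw [heq] at hr
  omega

/-- The sum over `l` of the fourth powers of the numbers of codewords of weight 16 with ones at
`x`, `y`, `z` and `l`. -/
noncomputable def tripleInvariant {n : ℕ} (D : Submodule (ZMod 2) (Fin n → ZMod 2))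
    (x y z : Fin n) : ℕ :=
  ∑ l, {v | v ∈ D ∧ wt v = 16 ∧ v x = 1 ∧ v y = 1 ∧ v z = 1 ∧ v l = 1}.ncard ^ 4

section

variable {n : ℕ} (D : Submodule (ZMod 2) (Fin n → ZMod 2)) (x y z : Fin n)

lemma tripleInvariant_swap : tripleInvariant D y x z = tripleInvariant D x y z := by
  simp only [tripleInvariant, and_left_comm]

lemma tripleInvariant_rotate : tripleInvariant D y z x = tripleInvariant D x y z := by
  simp only [tripleInvariant, and_left_comm]

lemma tripleInvariant_comp {D D' : Submodule (ZMod 2) (Fin n → ZMod 2)} {σ : Equiv.Perm (Fin n)}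
    (hσ : IsIso σ D D') (x y z : Fin n) :
    tripleInvariant D (σ x) (σ y) (σ z) = tripleInvariant D' x y z := by
  rw [tripleInvariant, ← Equiv.sum_comp σ, tripleInvariant]
  refine Finset.sum_congr rfl fun l _ => congrArg (· ^ 4) ?_
  refine Set.ncard_congr (fun v _ => v ∘ σ) (fun v hv => ?_)
    (fun v w _ _ h => σ.surjective.injective_comp_right h) fun v hv => ?_
  · simpa only [Set.mem_ofPred_eq, hσ v, wt_comp, Function.comp_apply] using hv
  · refine ⟨v ∘ σ.symm, ?_, by rw [Function.comp_assoc, Equiv.symm_comp_self, Function.comp_id]⟩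
    have hback : (v ∘ σ.symm) ∘ σ = v := by
      rw [Function.comp_assoc, Equiv.symm_comp_self, Function.comp_id]
    simpa only [Set.mem_ofPred_eq, ← hσ (v ∘ σ.symm), hback, wt_comp, Function.comp_apply,
      Equiv.symm_apply_apply] using hv

end

lemma IsFrame.tripleInvariant_eq {x y z : Fin 80} {a b : ℕ} {as bs : List ℕ}
    (h : IsFrame x y a as b bs) :
    tripleInvariant (rowSpan 80 (a :: as)) x y z = profile (scanWords x y a as b bs) z := by
  rw [scanWords_eq, profile_encode (fun w => h.lt_of_mem_commonWords) h.length_commonWords_lt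
    z.isLt]
  refine Finset.sum_congr rfl fun l _ => congrArg (· ^ 4) ?_
  set W := (commonWords x y a as b bs).filter fun w => w.testBit z && w.testBit l
  have hW : W.Nodup := h.nodup_commonWords.filter _
  rw [List.countP_eq_length_filter, ← List.toFinset_card_of_nodup hW, ← Set.ncard_coe_finset]
  refine (Set.ncard_congr (fun w _ => toVec 80 w) (fun w hw => ?_) (fun w w' hw hw' => ?_)
    fun v hv => ?_).symm
  · simp only [W, List.coe_toFinset, Set.mem_ofPred_eq, List.mem_filter, Bool.and_eq_true] at hw
    simpa only [Set.mem_ofPred_eq, toVec_apply_eq_one, and_assoc] using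
      And.intro (h.of_mem_commonWords hw.1) hw.2
  · simp only [W, List.coe_toFinset, Set.mem_ofPred_eq, List.mem_filter] at hw hw'
    exact toVec_eighty_injOn (h.lt_of_mem_commonWords hw.1) (h.lt_of_mem_commonWords hw'.1)
  · obtain ⟨hv, hwt, hx, hy, hz, hl⟩ := hv
    obtain ⟨w, hw, rfl⟩ := h.exists_mem_commonWords hv hwt rfl rfl hx hy
    rw [toVec_apply_eq_one] at hz hl
    exact ⟨w, by simp [W, hw, hz, hl], rfl⟩

lemma rowSpan_eq_of_perm {n : ℕ} {rs ls : List ℕ} (h : rs.Perm ls) :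
    rowSpan n rs = rowSpan n ls := by
  simp only [rowSpan, h.mem_iff]

/-- The values of `tripleInvariant` at `x` and `y` for the code generated by the shifts of `a` and
`a'`, and also by those of `b` and `b'`. -/
noncomputable def profileAt (x y a a' b b' : ℕ) : ℕ → ℕ :=
  profile (scanWords x y a (rows a a').tail b (rows b b').tail)

lemma Generators.IsDoublyEven.tripleInvariant_eq {c : Generators} (hc : c.IsDoublyEven)
    {a a' b b' : ℕ} (ha : (rows a a').Perm c.leftRows) (hb : (rows b b').Perm c.rightRows)
    {x y : Fin 80} (hx : x < 40) (hy : 40 ≤ y) (hax : a.testBit x) (hby : b.testBit y)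
    (z : Fin 80) : tripleInvariant c.code x y z = profileAt x y a a' b b' z := by
  have hspan : rowSpan 80 (rows a a') = c.code := rowSpan_eq_of_perm ha
  rw [← hspan]
  refine IsFrame.tripleInvariant_eq ⟨hc.left.perm ha.symm, hc.right.perm hb.symm, ?_, ?_,
    List.mem_range.2 hx, List.mem_range'_1.2 ⟨hy, y.isLt⟩, hax, hby⟩
  · exact (rowSpan_eq_of_perm hb).trans (hc.rowSpan_rightRows.trans hspan.symm)
  · exact fun r hr => hc.lt_two_pow r ((ha.append hb).subset hr)

end Invariants

/-! ### Isomorphisms between codes with separated invariants -/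

section Rigidity

namespace Generators

/-- `c.code` is doubly even and self-dual with minimum weight 16, and any two coordinates are
distinguished, and joined, by words of weight 16; this is what subtraction needs. -/
structure IsExtremal (c : Generators) : Prop where
  isDoublyEven : c.IsDoublyEven
  sixteen_le_wt : ∀ v ∈ c.code, v ≠ 0 → 16 ≤ wt v
  exists_wt_eq : ∀ i j, i ≠ j → ∀ b : ZMod 2, ∃ v ∈ c.code, wt v = 16 ∧ v i = 1 ∧ v j = b

/-- The code of length 78 obtained from `c.code` by subtracting the coordinates `p.1` and `p.2`. -/
def subtractedCode (c : Generators) (p : Fin 80 × Fin 80) :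
    Submodule (ZMod 2) (Fin 78 → ZMod 2) :=
  subtraction c.code (splitAt p.1 p.2)

namespace IsExtremal

variable {c : Generators} (hc : c.IsExtremal)
include hc

lemma exists_place_mem {i j : Fin 80} (hij : i ≠ j) (b : ZMod 2) :
    ∃ x, place (splitAt i j) x 1 b ∈ c.code ∧ wt (place (splitAt i j) x 1 b) = 16 := by
  obtain ⟨v, hv, hwt, hi, hj⟩ := hc.exists_wt_eq i j hij b
  obtain ⟨x, a, b', rfl⟩ := exists_place (splitAt i j) v
  have ha := place_inr_zero (splitAt i j) x a b'
  have hb := place_inr_one (splitAt i j) x a b'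
  rw [splitAt_inr_zero hij, hi] at ha
  rw [splitAt_inr_one, hj] at hb
  exact ⟨x, ha ▸ hb ▸ ⟨hv, hwt⟩⟩

lemma isSubtractable {i j : Fin 80} (hij : i ≠ j) : IsSubtractable c.code (splitAt i j) where
  isSelfDual := hc.isDoublyEven.isSelfDual
  four_dvd_wt _ := hc.isDoublyEven.four_dvd_wt
  exists_mem a b := by
    obtain ⟨x, hx, -⟩ := hc.exists_place_mem hij 0
    obtain ⟨y, hy, -⟩ := hc.exists_place_mem hij 1
    refine ⟨(a + b) • x + b • y, ?_⟩
    have hmem := c.code.add_mem (c.code.smul_mem (a + b) hx) (c.code.smul_mem b hy)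
    rwa [place_smul, place_smul, place_add, mul_one, mul_one, mul_zero, zero_add, add_assoc,
      CharTwo.add_self_eq_zero, add_zero] at hmem

variable {p : Fin 80 × Fin 80} (hp : p.1 ≠ p.2)
include hp

lemma minWt_subtractedCode : minWt (c.subtractedCode p) = 14 := by
  obtain ⟨x, hx, hwt⟩ := hc.exists_place_mem hp 1
  exact minWt_subtraction (d := 14) hc.sixteen_le_wt (by norm_num) hx hwt

lemma minWtSet_shadow_subtractedCode : minWtSet (shadow (c.subtractedCode p)) = 15 := by
  obtain ⟨x, hx, hwt⟩ := hc.exists_place_mem hp 0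
  exact (hc.isSubtractable hp).minWtSet_shadow_subtraction (d := 14) hc.sixteen_le_wt hx hwt

lemma isSinglyEvenSelfDual_subtractedCode : IsSinglyEvenSelfDual (c.subtractedCode p) := by
  refine ⟨(hc.isSubtractable hp).isSelfDual_subtraction, ?_⟩
  obtain ⟨x, hx, hwt⟩ := hc.exists_place_mem hp 1
  refine ⟨x, ⟨1, hx⟩, fun hdvd => ?_⟩
  rw [wt_place, ZMod.val_one] at hwt
  omega

lemma finrank_subtractedCode : Module.finrank (ZMod 2) (c.subtractedCode p) = 39 := by
  have := finrank_of_isSelfDual (hc.isSubtractable hp).isSelfDual_subtraction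
  change 2 * Module.finrank (ZMod 2) (c.subtractedCode p) = 78 at this
  omega

end IsExtremal
end Generators

variable {ι : Type*} {c : ι → Generators}

/-- The values of `tripleInvariant` at 0, 40 and any third coordinate in the codes of a family. -/
def markedValues (c : ι → Generators) : Set ℕ :=
  {t | ∃ b, ∃ z ∉ [0, 40], tripleInvariant (c b).code 0 40 z = t}

/-- The marked values determine the code and the third coordinate, and occur at no triple that
consists of 0, 60 or of 20, 40 and of a third coordinate, unless the triple contains 0 and 40. -/
structure IsSeparated (c : ι → Generators) : Prop where
  eq_of_eq : ∀ a b : ι, ∀ z ∉ [0, 40], ∀ z' ∉ [0, 40],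
    tripleInvariant (c a).code 0 40 z = tripleInvariant (c b).code 0 40 z' → a = b ∧ z = z'
  zero_sixty : ∀ a, ∀ z ∉ [0, 40, 60], tripleInvariant (c a).code 0 60 z ∉ markedValues c
  twenty_forty : ∀ a, ∀ z ∉ [0, 20, 40], tripleInvariant (c a).code 20 40 z ∉ markedValues c

variable {a b : ι} {x y : Fin 80} {σ : Equiv.Perm (Fin 80)}

lemma tripleInvariant_mem_markedValues (hσ : IsIso σ (c a).code (c b).code) {z : Fin 80}
    (h0 : z ≠ σ 0) (h40 : z ≠ σ 40) :
    tripleInvariant (c a).code (σ 0) (σ 40) z ∈ markedValues c := by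
  refine ⟨b, σ.symm z, ?_, ?_⟩
  · simpa [Equiv.symm_apply_eq] using ⟨h0, h40⟩
  · rw [← tripleInvariant_comp hσ, Equiv.apply_symm_apply]

namespace IsSeparated

variable (h : IsSeparated c)
include h

lemma eq_of_mem_markedValues (hx : x ∈ [0, 20, 40, 60]) (hxy : x ≠ y)
    (hmem : ∀ z, z ≠ x → z ≠ y → tripleInvariant (c a).code x y z ∈ markedValues c) :
    x = 0 ∧ y = 40 ∨ x = 40 ∧ y = 0 := by
  have hswap := tripleInvariant_swap (c a).code
  have hrot := tripleInvariant_rotate (c a).code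
  have h60 := h.zero_sixty a
  have h20 := h.twenty_forty a
  simp only [List.mem_cons, List.not_mem_nil, or_false, not_or] at hx h60 h20
  have hz0 := hmem 0
  have hz20 := hmem 20
  have hz40 := hmem 40
  have hz60 := hmem 60
  have hz1 := hmem 1
  -- If {x, y} ≠ {0, 40}, one of these five z makes {x, y, z} contain 0 and 60 or 20 and 40, but
  -- not both 0 and 40.
  grind

lemma eq_of_isIso (hσ : IsIso σ (c a).code (c b).code) {z : Fin 80} (hz : z ∉ [0, 40])
    (hpair : σ 0 = 0 ∧ σ 40 = 40 ∨ σ 0 = 40 ∧ σ 40 = 0) : a = b ∧ σ z = z := by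
  refine h.eq_of_eq a b (σ z) (fun hmem => hz ?_) z hz ?_
  · grind [σ.injective.eq_iff]
  · rw [← tripleInvariant_comp hσ]
    rcases hpair with ⟨h0, h40⟩ | ⟨h0, h40⟩ <;> rw [h0, h40]
    rw [tripleInvariant_swap]

lemma ne_swap_of_isIso (hc : ∀ a, (c a).IsExtremal) (hσ : IsIso σ (c a).code (c b).code) :
    ¬ (σ 0 = 40 ∧ σ 40 = 0) := by
  rintro ⟨h0, h40⟩
  have hfix (z : Fin 80) (hz : z ∉ [0, 40]) := h.eq_of_isIso hσ hz (Or.inr ⟨h0, h40⟩)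
  obtain rfl := (hfix 1 (by decide)).1
  obtain ⟨v, hv, -, hv0, hv40⟩ := (hc a).exists_wt_eq 0 40 (by decide) 0
  have hne : v + v ∘ σ ≠ 0 := fun heq => by simpa [h0, hv0, hv40] using congrFun heq 0
  have hle := (hc a).sixteen_le_wt _ ((c a).code.add_mem hv ((hσ v).2 hv)) hne
  have hsub : ({z | (v + v ∘ σ) z ≠ 0} : Finset (Fin 80)) ⊆ {0, 40} := fun z hz => by
    by_contra hmem
    have hz' := (hfix z (by simpa using hmem)).2
    simp [hz', CharTwo.add_self_eq_zero] at hz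
  have := (Finset.card_le_card hsub).trans Finset.card_le_two
  exact absurd (hle.trans this) (by norm_num)

lemma eq_one_of_isIso (hc : ∀ a, (c a).IsExtremal) (hσ : IsIso σ (c a).code (c b).code)
    (h0 : σ 0 ∈ [0, 20, 40, 60]) : a = b ∧ σ = 1 := by
  obtain ⟨h0, h40⟩ := (h.eq_of_mem_markedValues h0 (σ.injective.ne (by decide))
    fun z => tripleInvariant_mem_markedValues hσ).resolve_right (h.ne_swap_of_isIso hc hσ)
  have hfix (z : Fin 80) (hz : z ∉ [0, 40]) := h.eq_of_isIso hσ hz (Or.inl ⟨h0, h40⟩)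
  refine ⟨(hfix 1 (by decide)).1, Equiv.ext fun z => ?_⟩
  by_cases hz : z ∈ [0, 40]
  · simp only [List.mem_cons, List.not_mem_nil, or_false] at hz
    rcases hz with rfl | rfl
    exacts [h0, h40]
  · exact (hfix z hz).2

lemma exists_blockRotation_pow_mul_eq_one (hc : ∀ a, (c a).IsExtremal)
    (hσ : IsIso σ (c a).code (c b).code) : a = b ∧ ∃ k < 20, blockRotation ^ k * σ = 1 := by
  obtain ⟨k, hk, hmem⟩ := exists_blockRotation_pow_mem (σ 0)
  obtain ⟨hab, hone⟩ := h.eq_one_of_isIso hc (σ := blockRotation ^ k * σ) (b := b) (a := a)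
    (fun v => (hσ _).trans (isIso_blockRotation_pow k v)) hmem
  exact ⟨hab, k, hk, hone⟩

end IsSeparated
end Rigidity

/-! ### Counting inequivalent codes -/

section Counting

lemma exists_card_eq_pairwise_not {α : Type*} {R : α → α → Prop} {s : Finset α} {T : α → Finset α}
    {k n : ℕ} (hsymm : ∀ x y, R x y → R y x)
    (hT : ∀ x ∈ s, ∀ y ∈ s, R x y → y ∈ T x) (hrefl : ∀ x, x ∈ T x) (hk : ∀ x, #(T x) ≤ k)
    (hn : (n - 1) * k < #s) :
    ∃ A ⊆ s, #A = n ∧ (A : Set α).Pairwise fun x y => ¬ R x y := by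
  classical
  induction n with
  | zero => exact ⟨∅, by simp⟩
  | succ n ih =>
    obtain ⟨A, hAs, hA, hpair⟩ := ih (lt_of_le_of_lt (by gcongr; omega) hn)
    obtain ⟨y, hys, hy⟩ : ∃ y ∈ s, y ∉ A.biUnion T := by
      refine Finset.exists_mem_notMem_of_card_lt_card (lt_of_le_of_lt ?_ hn)
      exact Finset.card_biUnion_le_card_mul _ _ _ (fun x _ => hk x) |>.trans (by simp [hA])
    simp only [Finset.mem_biUnion, not_exists, not_and] at hy
    refine ⟨insert y A, Finset.insert_subset hys hAs, ?_, ?_⟩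
    · rw [Finset.card_insert_of_notMem fun hyA => hy y hyA (hrefl y), hA]
    · rw [Finset.coe_insert]
      refine hpair.insert fun x hx _ => ⟨fun hyx => ?_, fun hxy => ?_⟩
      · exact hy x hx (hT x (hAs hx) y hys (hsymm y x hyx))
      · exact hy x hx (hT x (hAs hx) y hys hxy)

/-- The pairs of coordinates obtained from `p` by rotation and interchange. -/
def rotations (p : Fin 80 × Fin 80) : Finset (Fin 80 × Fin 80) :=
  (univ : Finset (Fin 20 × Bool)).image fun t =>
    let q := p.map ⇑(blockRotation ^ t.1.val) ⇑(blockRotation ^ t.1.val)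
    if t.2 then q.swap else q

lemma card_rotations_le (p : Fin 80 × Fin 80) : #(rotations p) ≤ 40 := Finset.card_image_le

lemma mem_rotations_self (p : Fin 80 × Fin 80) : p ∈ rotations p :=
  Finset.mem_image.2 ⟨(0, false), Finset.mem_univ _, rfl⟩

variable {ι : Type*} {c : ι → Generators}

lemma IsSeparated.mem_rotations (h : IsSeparated c) (hc : ∀ a, (c a).IsExtremal) {a b : ι}
    {p q : Fin 80 × Fin 80} (hp : p.1 ≠ p.2) (hq : q.1 ≠ q.2)
    (hequiv : CodeEquiv ((c a).subtractedCode p) ((c b).subtractedCode q)) :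
    a = b ∧ q ∈ rotations p := by
  obtain ⟨ρ, hρ, hpq⟩ :=
    ((hc a).isSubtractable hp).exists_isIso ((hc b).isSubtractable hq) hequiv
  rw [splitAt_inr_zero hp, splitAt_inr_zero hq, splitAt_inr_one, splitAt_inr_one] at hpq
  obtain ⟨hab, k, hk, hone⟩ := h.exists_blockRotation_pow_mul_eq_one hc hρ
  have hback (x : Fin 80) : (blockRotation ^ k) (ρ x) = x := Equiv.congr_fun hone x
  refine ⟨hab, Finset.mem_image.2 ?_⟩
  rcases hpq with ⟨h1, h2⟩ | ⟨h1, h2⟩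
  · refine ⟨(⟨k, hk⟩, false), Finset.mem_univ _, ?_⟩
    simp [Prod.map, ← h1, ← h2, hback]
  · refine ⟨(⟨k, hk⟩, true), Finset.mem_univ _, ?_⟩
    simp [Prod.map, ← h1, ← h2, hback]

lemma IsSeparated.exists_inequivalent [Fintype ι] (h : IsSeparated c)
    (hc : ∀ a, (c a).IsExtremal) {n : ℕ} (hn : (n - 1) * 40 < Fintype.card ι * 6320) :
    ∃ A : Finset (ι × Fin 80 × Fin 80), #A = n ∧ (∀ p ∈ A, p.2.1 ≠ p.2.2) ∧
      (A : Set (ι × Fin 80 × Fin 80)).Pairwise fun p q =>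
        ¬ CodeEquiv ((c p.1).subtractedCode p.2) ((c q.1).subtractedCode q.2) := by
  let R (p q : ι × Fin 80 × Fin 80) : Prop :=
    CodeEquiv ((c p.1).subtractedCode p.2) ((c q.1).subtractedCode q.2)
  let s : Finset (ι × Fin 80 × Fin 80) := univ ×ˢ univ.offDiag
  have hne {p : ι × Fin 80 × Fin 80} (hp : p ∈ s) : p.2.1 ≠ p.2.2 :=
    (Finset.mem_offDiag.1 (Finset.mem_product.1 hp).2).2.2
  have hcard : #s = Fintype.card ι * 6320 := by
    rw [Finset.card_product, Finset.offDiag_card, Finset.card_univ, Finset.card_univ,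
      Fintype.card_fin]
  let T (p : ι × Fin 80 × Fin 80) : Finset (ι × Fin 80 × Fin 80) := {p.1} ×ˢ rotations p.2
  have hT (p) (hp : p ∈ s) (q) (hq : q ∈ s) (hR : R p q) : q ∈ T p := by
    obtain ⟨hab, hmem⟩ := h.mem_rotations hc (hne hp) (hne hq) hR
    exact Finset.mem_product.2 ⟨Finset.mem_singleton.2 hab.symm, hmem⟩
  have hT_self (p) : p ∈ T p :=
    Finset.mem_product.2 ⟨Finset.mem_singleton_self _, mem_rotations_self _⟩
  have hT_card (p) : #(T p) ≤ 40 := by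
    rw [Finset.card_product, Finset.card_singleton, one_mul]
    exact card_rotations_le p.2
  have hR_symm (p q) (hR : R p q) : R q p := codeEquiv_symm hR
  obtain ⟨A, hA, hcardA, hpair⟩ :=
    exists_card_eq_pairwise_not (n := n) hR_symm hT hT_self hT_card (by rwa [hcard])
  exact ⟨A, hcardA, fun p hp => hne (hA hp), hpair⟩

end Counting

/-! ### Verification of the conditions by computation -/

section Verification

namespace Generators.IsDoublyEven

variable {c : Generators} (hc : c.IsDoublyEven)
include hc

lemma isExtremal (hleft : NoLightSums (List.range' 40 40) c.leftRows)
    (hright : NoLightSums (List.range 40) c.rightRows) {ws : List ℕ}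
    (hws : ∀ w ∈ ws, weightOn (List.range 80) w = 16 ∧
      ∀ r ∈ c.rightRows, 2 ∣ weightOn (List.range 80) (w &&& r))
    (hsep : ∀ i ∈ [0, 20, 40, 60], ∀ j ∈ List.range 80, i ≠ j → ∀ b,
      ∃ w ∈ ws.flatMap (List.iterate rotate · 20), w.testBit i ∧ w.testBit j = b) :
    c.IsExtremal where
  isDoublyEven := hc
  sixteen_le_wt _ := hc.sixteen_le_wt hleft hright
  exists_wt_eq i j hij b := by
    obtain ⟨k, -, hi⟩ := exists_blockRotation_pow_mem i
    set ρ : Equiv.Perm (Fin 80) := blockRotation ^ k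
    obtain ⟨_, hmem, hwi, hwj⟩ := hsep (ρ i) (List.mem_map_of_mem (f := Fin.val) hi) (ρ j)
      (List.mem_range.2 (ρ j).isLt) (Fin.val_ne_of_ne (ρ.injective.ne hij)) (b = 1)
    obtain ⟨w, hw, hws'⟩ := List.mem_flatMap.1 hmem
    obtain ⟨s, -, rfl⟩ := List.mem_iterate.1 hws'
    refine ⟨toVec 80 (rotate^[s] w) ∘ ρ, comp_mem_rowSpan ?_ k, ?_, ?_, ?_⟩
    · rw [toVec_iterate_rotate]
      exact comp_mem_rowSpan (hc.toVec_mem_code (hws w hw).2) s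
    · rw [wt_comp, toVec_iterate_rotate, wt_comp, wt_toVec]
      exact (hws w hw).1
    · exact toVec_apply_eq_one.2 hwi
    · rcases zmod_two_eq_zero_or_one b with rfl | rfl
      · exact toVec_apply_eq_zero.2 (by simpa using hwj)
      · exact toVec_apply_eq_one.2 (by simpa using hwj)

lemma tripleInvariant_zero_forty (z : Fin 80) : tripleInvariant c.code 0 40 z =
    profileAt 0 40 c.left₀ c.left₁ c.right₀ c.right₁ z :=
  hc.tripleInvariant_eq (.refl _) (.refl _) (by decide) (by decide) hc.leading.1
    hc.leading.2.2.1 z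

lemma tripleInvariant_zero_sixty (z : Fin 80) : tripleInvariant c.code 0 60 z =
    profileAt 0 60 c.left₀ c.left₁ c.right₁ c.right₀ z :=
  hc.tripleInvariant_eq (.refl _) rows_perm (by decide) (by decide) hc.leading.1
    hc.leading.2.2.2 z

lemma tripleInvariant_twenty_forty (z : Fin 80) : tripleInvariant c.code 20 40 z =
    profileAt 20 40 c.left₁ c.left₀ c.right₀ c.right₁ z :=
  hc.tripleInvariant_eq rows_perm (.refl _) (by decide) (by decide) hc.leading.2.1
    hc.leading.2.2.1 z

end Generators.IsDoublyEven

/-- A number by which entries of long lists of numbers are told apart with few operations: divisors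
of the form `t ^ 2 + 1` indicate the entries `t`. -/
def squareProduct (L : List ℕ) : ℕ := (L.map fun t => t ^ 2 + 1).prod

lemma notMem_of_squareProduct_mod_ne_zero {L : List ℕ} {t : ℕ}
    (h : squareProduct L % (t ^ 2 + 1) ≠ 0) : t ∉ L := fun ht =>
  h (Nat.mod_eq_zero_of_dvd (List.dvd_prod (List.mem_map_of_mem ht)))

lemma nodup_of_squareProduct_mod_ne_zero {L : List ℕ}
    (h : ∀ t ∈ L, squareProduct L % (t ^ 2 + 1) ^ 2 ≠ 0) : L.Nodup := by
  refine List.nodup_iff_sublist.2 fun t ht => h t (ht.subset List.mem_cons_self) ?_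
  have hdvd := (ht.map fun t => t ^ 2 + 1).prod_dvd_prod
  rw [List.map_cons, List.map_singleton, List.prod_pair, ← sq] at hdvd
  exact Nat.mod_eq_zero_of_dvd hdvd

/-- Generators of thirteen extremal doubly even codes. -/
def codes : Fin 13 → Generators := ![
  ⟨0x35ed16854a0000000001, 0x673e9c12a40000100000,
    0x00000000014a906a542c, 0x00001000002f9cd16f59⟩,
  ⟨0x032a5b9a8f0000000001, 0xc4698580390000100000,
    0x000000000138035e2b3b, 0x000010000032c464a981⟩,
  ⟨0x59b8bc07890000000001, 0xe2b9bf06760000100000,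
    0x0000000001dcc1e23c07, 0x0000100000b3a8fa3b35⟩,
  ⟨0xb3f65fddb10000000001, 0x1b77f18ace0000100000,
    0x0000000001e6a301b77f, 0x0000100000fddb14df9b⟩,
  ⟨0xc40dfdf0ed0000000001, 0x4301295ae20000100000,
    0x00000000018eb526e1f7, 0x000010000090184f6047⟩,
  ⟨0xcc93fbe7280000000001, 0x08ea8b00cd0000100000,
    0x00000000016601b29cfa, 0x00001000002ae20f9267⟩,
  ⟨0x3893ebecd90000000001, 0xd21a3693470000100000,
    0x0000000001c592d366fb, 0x00001000008b097f9238⟩,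
  ⟨0x117a91c59b0000000001, 0x2de0be6a240000100000,
    0x000000000148aceb3471, 0x0000100000a0f692bd11⟩,
  ⟨0xe2fa16ef0d0000000001, 0xd31fafd3de0000100000,
    0x0000000001f797e61eed, 0x0000100000bf1960be8f⟩,
  ⟨0x7a3151cefe0000000001, 0x50b1ed554c0000100000,
    0x000000000165556fee70, 0x0000100000f1a14518bd⟩,
  ⟨0x7a503d19360000000001, 0xb262dce5b70000100000,
    0x0000000001db4e7d9316, 0x000010000068c9b814bd⟩,
  ⟨0xc3c522e9660000000001, 0x65a2ee43c10000100000,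
    0x00000000010784fcd2e8, 0x0000100000e8b4c94786⟩,
  ⟨0x3b836265cc0000000001, 0xaa3fde23e40000100000,
    0x00000000014f88e674c8, 0x00001000007f8abd83b8⟩]

/-- Words of weight 16 in the codes `codes`. -/
def witnesses : Fin 13 → List ℕ := ![
  [0x0d100209208420868020, 0x080011c844044a010421, 0x85098208320140120004, 0x10a0100281003c441802],
  [0x808112a0204023004015, 0x00700201c1c004510042, 0x200a6100c000812c2101, 0x303410810800841006c0],
  [0x106020134002e0001281, 0x4008400188b120001c41, 0x42214390201004100908, 0x182c040028201040a148],
  [0x022421001540c02100c4, 0x820040482e072000a100, 0x708080000d2001401622, 0x188c0051a00611200200],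
  [0x4c42000a419002020034, 0x2008021812c2001202c4, 0x8a441102810419004100, 0x550044108010014218c0],
  [0x06094a01010c20002640, 0x0082a120412841020a40, 0x040401a8010805805212, 0x04401900014122460882],
  [0x828404c030202120a008, 0x310020502020c018011c, 0x24000801120d50402601, 0x08803058400200421492],
  [0x80402010502441812046, 0x00d45090600400428108, 0x889040204710022c0001, 0x800084084298a0128208],
  [0xc80044202940082c1080, 0x14214000c02025600821, 0x00308660122000120648, 0x02400608082802430550,
    0x0a0510081121c1020a00],
  [0x02a0001032023098c001, 0x0e402210824100208414, 0x1450400b800001aa0180, 0x0c413080020000aa0861],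
  [0x84030300a00446003480, 0x28120840231008144024, 0x31141000400070901822, 0x00021058940444401841],
  [0x0068c025020182400190, 0x002010c8201216250402, 0x10003600882818001134, 0xa8902c0c090018000108],
  [0x0481101105086021a100, 0x1200a4040c1052001046, 0x800a0634006098009200, 0x00d00008438050017102]]

/-- The values of `tripleInvariant` at 0, 40 and any third coordinate, in the codes `codes`. -/
def invariants : Fin 13 → List ℕ := ![
  [599560541964, 599367218720, 599411540648, 599439165272, 599401409612, 599337112516,
    599389565196, 599288963952, 599378587728, 599396755096, 599399836872, 599492469772,
    599464402792, 599506602780, 599448950088, 599537730880, 599322312284, 599275820760,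
    599305759528, 599564949404, 599304009724, 599331262864, 599464688316, 599375309400,
    599388200596, 599424655196, 599356958028, 599404635884, 599454988852, 599329855564,
    599516544684, 599348820480, 599386551276, 599432420052, 599460596216, 599379624188,
    599421904792, 599347896544, 599357220744, 599338143132, 599437592200, 599330035108,
    599453822904, 599541366124, 599308028072, 599370367224, 599328097400, 599422835456,
    599435128376, 599284618700, 599345389960, 599235743648, 599309654280, 599575250424,
    599311350364, 599453309260, 599216283840, 599330658104, 599290997416, 599355492764,
    599478033256, 599354869148, 599375367784, 599382635348, 599491179296, 599528260332,
    599508563944, 599336517764, 599356114820, 599575164876, 599424977772, 599360711784,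
    599428142616, 599416206300, 599403276100, 599398969960, 599380467720, 599354865848],
  [599367466352, 599288628192, 599357700004, 599384350160, 599386622652, 599497212948,
    599302814292, 599500154412, 599388177500, 599512245404, 599486734188, 599335181100,
    599410483720, 599440251236, 599357764060, 599438461892, 599480793124, 599403989128,
    599533190828, 599611784984, 599358847788, 599446094536, 599343090092, 599538025792,
    599331135896, 599213562132, 599329966172, 599377870848, 599375926216, 599448394220,
    599298060284, 599417910324, 599321492204, 599475601676, 599491766268, 599418498632,
    599399893964, 599456242792, 599386047204, 599489847112, 599515735620, 599445169108,
    599632236592, 599450181352, 599406506428, 599380902852, 599402532308, 599476291420,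
    599415778204, 599344451676, 599437358168, 599385738164, 599391600476, 599375235840,
    599492103964, 599464192552, 599381549900, 599395184020, 599308657148, 599447469208,
    599315043224, 599674888512, 599544315260, 599351662096, 599526139372, 599419916344,
    599355665572, 599452815144, 599299385476, 599524284172, 599497114804, 599388628836,
    599414918104, 599333539612, 599324671656, 599349486128, 599305025240, 599428996808],
  [599587488444, 599374371496, 599377899148, 599395182136, 599392367096, 599300603640,
    599460217380, 599311493972, 599383177948, 599467131576, 599473391344, 599278506284,
    599455540504, 599465594588, 599303653084, 599450644088, 599608003272, 599430355780,
    599464760712, 599558912408, 599555696100, 599402878904, 599387917564, 599510432008,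
    599355730708, 599343023016, 599443224744, 599440755184, 599429328708, 599324370008,
    599414577532, 599392538568, 599317997888, 599408802360, 599473277124, 599423806856,
    599439645452, 599299735484, 599392468260, 599383708712, 599348346068, 599535103876,
    599488194756, 599420543576, 599508744556, 599273192780, 599334110380, 599352783592,
    599423854652, 599365676704, 599304665884, 599460018892, 599335271744, 599383377924,
    599268859412, 599298028364, 599435998136, 599358890588, 599305680412, 599341331868,
    599390423096, 599467121772, 599328660432, 599437542664, 599297115820, 599491104312,
    599305909232, 599455555984, 599374358720, 599375119076, 599300086428, 599470958428,
    599582014856, 599252427796, 599261287732, 599390097164, 599399154492, 599448868160],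
  [599464270316, 599375998432, 599335856852, 599291309764, 599447612892, 599407188672,
    599499597096, 599429939656, 599443303528, 599366907408, 599496707448, 599291306004,
    599491084576, 599376264804, 599438835676, 599371628840, 599417486428, 599495621828,
    599409262528, 599346184780, 599353383052, 599352213444, 599318530508, 599484620340,
    599284217932, 599410679340, 599270730812, 599338806756, 599411489084, 599390995224,
    599442158092, 599337074872, 599398885160, 599378523304, 599395529556, 599272040820,
    599605630944, 599468242664, 599310369032, 599420238332, 599367355604, 599444869108,
    599490665348, 599507273020, 599366365108, 599490280776, 599249582140, 599466835304,
    599392424300, 599423015976, 599440533848, 599367851096, 599429355880, 599452264188,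
    599338845544, 599311101128, 599296816888, 599421498828, 599357029592, 599475168700,
    599404044596, 599372618540, 599422249356, 599413185112, 599309516012, 599319156596,
    599360558548, 599488308880, 599504168312, 599390271512, 599381937892, 599402728924,
    599414991664, 599390668492, 599506957972, 599448954840, 599473213460, 599267154400],
  [599424881692, 599236555496, 599498306760, 599409058376, 599406478616, 599474422460,
    599417216380, 599386360456, 599608937644, 599399749944, 599569651388, 599411375484,
    599513436504, 599544927960, 599456631348, 599465674792, 599464990444, 599310671416,
    599396387064, 599364879832, 599439225228, 599385292312, 599525726552, 599370791144,
    599294527536, 599320677684, 599485221448, 599403365292, 599457741536, 599336855736,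
    599345265600, 599505129044, 599482231572, 599209315608, 599532065844, 599599374756,
    599443321000, 599381066704, 599435963244, 599344071352, 599525654980, 599389808132,
    599423251592, 599513680248, 599381200820, 599467965992, 599469737660, 599359035940,
    599343809692, 599327401416, 599414779524, 599428221084, 599335160704, 599452665920,
    599296304532, 599442347308, 599408310980, 599384955932, 599345111940, 599427927800,
    599387197244, 599681144872, 599335752212, 599447691484, 599371335708, 599344356276,
    599340849604, 599422732652, 599453915172, 599442708712, 599363315928, 599494129424,
    599218312908, 599390376776, 599483458836, 599402362844, 599544441896, 599390696704],
  [599321255768, 599471717388, 599300398676, 599479177916, 599399019820, 599585559740,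
    599355714588, 599367797320, 599359250936, 599385932860, 599383202476, 599299297372,
    599346897380, 599447226364, 599468735284, 599407688440, 599420671284, 599241934032,
    599435078552, 599484993892, 599409159224, 599413904968, 599353353864, 599382103336,
    599281283792, 599317139748, 599412874148, 599575734764, 599364953556, 599304579160,
    599518031776, 599467845344, 599510503848, 599305387272, 599542954308, 599311434040,
    599434878964, 599371811340, 599316477888, 599371224696, 599395742052, 599373366968,
    599384217436, 599403538956, 599258795100, 599343006852, 599463686372, 599396279088,
    599309609280, 599301713296, 599270754380, 599582759260, 599401510204, 599339422764,
    599441905172, 599352122632, 599446974888, 599481725832, 599228422972, 599447018792,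
    599519394532, 599323617668, 599383976328, 599402115596, 599468644464, 599495070032,
    599397345844, 599263655784, 599402133288, 599351853360, 599552240856, 599486806276,
    599287047896, 599456927444, 599363047712, 599534029724, 599304247208, 599453500504],
  [599372633924, 599368134568, 599467554128, 599501939020, 599345776704, 599448064136,
    599322558240, 599345178428, 599439155300, 599353526104, 599416816104, 599406123692,
    599505239856, 599330531188, 599428585704, 599500041272, 599331460212, 599361311640,
    599334238280, 599434266168, 599321549060, 599338780476, 599459327708, 599402445868,
    599452807080, 599342307472, 599323452328, 599375727568, 599393128920, 599474331708,
    599315912252, 599426260416, 599297562712, 599459062264, 599394639784, 599483547760,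
    599570171496, 599371873404, 599395884476, 599428068136, 599376194200, 599378488860,
    599455059932, 599437525872, 599393615564, 599362995096, 599333378376, 599475486868,
    599289735900, 599388089232, 599476643616, 599397157596, 599297395848, 599449173576,
    599371486060, 599376630080, 599344139228, 599323712632, 599312753176, 599275448168,
    599365284468, 599336017304, 599443089748, 599266282476, 599261873112, 599335006796,
    599514123636, 599360387496, 599411015736, 599348587256, 599429369068, 599376876788,
    599391234008, 599355334956, 599478009332, 599359638220, 599429446460, 599396027088],
  [599435743580, 599219903184, 599319731672, 599430579360, 599514872868, 599357133616,
    599302386892, 599280213084, 599476085644, 599288618988, 599504513220, 599333090184,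
    599392325328, 599351290824, 599384198668, 599396617380, 599489453624, 599453423064,
    599454507988, 599455795508, 599385126364, 599442439684, 599303454456, 599302080900,
    599421121400, 599483297960, 599450728748, 599455364316, 599529595336, 599412008640,
    599354840252, 599438891592, 599408809512, 599336655532, 599335610840, 599465159100,
    599434013376, 599442425180, 599417936268, 599448020344, 599327729844, 599504051000,
    599454301336, 599278278912, 599344632116, 599332678644, 599503054616, 599389244936,
    599539153100, 599367841752, 599350234376, 599385624628, 599490294000, 599315237420,
    599463909736, 599466491288, 599374065492, 599442975500, 599386028808, 599351417052,
    599342196332, 599409795200, 599308484992, 599363523580, 599421898220, 599339440956,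
    599392058504, 599437965396, 599437556840, 599388657080, 599376309196, 599343344188,
    599314200548, 599317386548, 599261938664, 599445185500, 599401821676, 599366970804],
  [599440452548, 599451532228, 599406729280, 599434468316, 599328706724, 599450430264,
    599318302412, 599315388304, 599401131976, 599493690268, 599407734364, 599555568652,
    599274508872, 599458766284, 599617242524, 599293884188, 599486594088, 599482369756,
    599339413032, 599279538984, 599397507832, 599438512644, 599536144072, 599417136604,
    599391572572, 599441137796, 599373085396, 599347935172, 599569808360, 599399530548,
    599306636536, 599475188468, 599403959044, 599490885164, 599445507320, 599267025204,
    599291253016, 599295315036, 599430234356, 599532719656, 599455147628, 599360820136,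
    599334609208, 599457296108, 599450860624, 599362068356, 599448290860, 599388787508,
    599475371036, 599389575524, 599342108164, 599553361348, 599438705436, 599507169068,
    599395471060, 599299475900, 599476080956, 599348487192, 599350660560, 599378564212,
    599369771844, 599377612204, 599301067420, 599341667952, 599465037500, 599383504780,
    599373077240, 599438088256, 599384896580, 599430995100, 599337817040, 599424371052,
    599509341152, 599355503780, 599296946292, 599425954152, 599508270124, 599277932508],
  [599445972136, 599288709524, 599488050348, 599368608956, 599435254392, 599312562956,
    599387582688, 599525630696, 599430126192, 599332716792, 599465917420, 599350380168,
    599425969216, 599483064388, 599400605596, 599519815928, 599393068664, 599432655224,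
    599502449988, 599505993152, 599489377372, 599382760344, 599404905156, 599478110488,
    599558068520, 599444521788, 599497600668, 599283713716, 599346242584, 599410986932,
    599383462508, 599351286828, 599366681036, 599550981960, 599592381688, 599348602944,
    599314610188, 599302969256, 599387738380, 599387021664, 599385863000, 599474778624,
    599426911696, 599258984724, 599393936524, 599311514912, 599290269528, 599331857476,
    599440735908, 599379941148, 599355983684, 599341934596, 599328174908, 599328270032,
    599441400400, 599507707768, 599441592512, 599399098072, 599387354872, 599301562156,
    599497489352, 599546297304, 599345923188, 599372275056, 599387574840, 599312744888,
    599476559772, 599501680128, 599389179768, 599390273496, 599444385976, 599388787668,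
    599436966124, 599328433004, 599398272316, 599468118344, 599485617256, 599495881960],
  [599305044536, 599306893384, 599434165052, 599468780628, 599324208708, 599456856260,
    599426922372, 599283806312, 599467644712, 599429637112, 599484691416, 599407431160,
    599415481664, 599244106460, 599270794408, 599425659228, 599359221016, 599361482376,
    599432611596, 599371794956, 599461730776, 599402459172, 599306587304, 599461537608,
    599586260028, 599377079616, 599438382604, 599382622188, 599381990492, 599301934532,
    599487954304, 599330099164, 599443705880, 599557598500, 599628796424, 599356293764,
    599347978540, 599352216780, 599480610196, 599236224684, 599408283616, 599480882164,
    599552320228, 599280065896, 599341790748, 599386868156, 599593885592, 599337315384,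
    599368064692, 599533849492, 599376996132, 599412322104, 599567932572, 599518141212,
    599376181180, 599480056772, 599424837308, 599348697572, 599383084956, 599264798312,
    599315475776, 599376937964, 599479768988, 599310620364, 599375878236, 599414624308,
    599465756572, 599356269016, 599426713424, 599441221840, 599372592984, 599516509596,
    599511875524, 599451838672, 599483025288, 599405270848, 599528788856, 599399058336],
  [599412744820, 599273360424, 599292154216, 599439558032, 599315605316, 599438778520,
    599333617208, 599280612336, 599513729360, 599358494780, 599442529372, 599404610776,
    599462696608, 599349081716, 599267136280, 599378476412, 599408172508, 599321394752,
    599496369148, 599443183720, 599538635068, 599417037736, 599381681020, 599412768124,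
    599371271060, 599344185428, 599351989252, 599513766828, 599511635112, 599368495000,
    599313743100, 599381262412, 599462090980, 599396114684, 599372716520, 599265558860,
    599227119020, 599333012980, 599428367820, 599391304796, 599379809060, 599324438960,
    599357778880, 599315600052, 599470255328, 599285530360, 599335206460, 599406852720,
    599511599448, 599317663552, 599304795240, 599382238364, 599399179336, 599421083188,
    599326197916, 599374705484, 599453133924, 599455487672, 599331689716, 599328121324,
    599403078400, 599498523340, 599441278560, 599451586316, 599473162748, 599358704284,
    599371592280, 599282170816, 599419374264, 599440753700, 599377453100, 599388089984,
    599491555036, 599486635200, 599309024380, 599444498572, 599221687948, 599323127976],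
  [599551971896, 599432830832, 599445295780, 599354803720, 599311884116, 599342402660,
    599453822588, 599227023900, 599366065796, 599427665628, 599425388548, 599339373880,
    599469794480, 599433737344, 599188366668, 599373756096, 599462036996, 599424151584,
    599423577668, 599250411432, 599300647668, 599468911036, 599536417064, 599415162004,
    599267651176, 599377590636, 599358726076, 599458182472, 599353035784, 599330019196,
    599430855560, 599337815864, 599429747796, 599526713392, 599394767548, 599485713932,
    599384477712, 599368806296, 599372069036, 599339616968, 599394279264, 599488530964,
    599435138092, 599448752632, 599369638556, 599522518168, 599351001060, 599312142768,
    599447195316, 599566710280, 599380023056, 599412754408, 599405568840, 599399720820,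
    599393664536, 599436788652, 599304771476, 599430905336, 599576154604, 599403463740,
    599255579276, 599461231260, 599371076728, 599440371572, 599336727944, 599452872492,
    599424380760, 599285642148, 599407671056, 599296306812, 599416624712, 599308722692,
    599408988648, 599386411448, 599339214684, 599268108840, 599262346660, 599286294608]]

variable (a : Fin 13)

lemma isDoublyEven_codes : (codes a).IsDoublyEven := by
  fin_cases a <;> exact ⟨by decide +kernel, by decide +kernel, by decide +kernel,
    by decide +kernel, by decide +kernel, by decide +kernel⟩

lemma noLightSums_leftRows : NoLightSums (List.range' 40 40) (codes a).leftRows := by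
  fin_cases a <;> decide +kernel

lemma noLightSums_rightRows : NoLightSums (List.range 40) (codes a).rightRows := by
  fin_cases a <;> decide +kernel

lemma weightOn_witnesses : ∀ w ∈ witnesses a, weightOn (List.range 80) w = 16 ∧
    ∀ r ∈ (codes a).rightRows, 2 ∣ weightOn (List.range 80) (w &&& r) := by
  fin_cases a <;> decide +kernel

lemma exists_mem_rotations_witnesses : ∀ i ∈ [0, 20, 40, 60], ∀ j ∈ List.range 80, i ≠ j →
    ∀ b, ∃ w ∈ (witnesses a).flatMap (List.iterate rotate · 20),
      w.testBit i ∧ w.testBit j = b := by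
  fin_cases a <;> decide +kernel

lemma isExtremal_codes : (codes a).IsExtremal :=
  (isDoublyEven_codes a).isExtremal (noLightSums_leftRows a) (noLightSums_rightRows a)
    (weightOn_witnesses a) (exists_mem_rotations_witnesses a)

/-- The marked values of the family `codes`. -/
def allInvariants : List ℕ := (List.finRange 13).flatMap invariants

lemma nodup_allInvariants : allInvariants.Nodup :=
  nodup_of_squareProduct_mod_ne_zero (by decide +kernel)

set_option maxHeartbeats 4000000 in
lemma profile_zero_forty : ((List.range 80).diff [0, 40]).map (profileAt 0 40 (codes a).left₀
    (codes a).left₁ (codes a).right₀ (codes a).right₁) = invariants a := by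
  fin_cases a <;> decide +kernel

set_option maxHeartbeats 4000000 in
lemma profile_zero_sixty : ∀ t ∈ ((List.range 80).diff [0, 40, 60]).map (profileAt 0 60
    (codes a).left₀ (codes a).left₁ (codes a).right₁ (codes a).right₀),
    squareProduct allInvariants % (t ^ 2 + 1) ≠ 0 := by
  fin_cases a <;> decide +kernel

set_option maxHeartbeats 4000000 in
lemma profile_twenty_forty : ∀ t ∈ ((List.range 80).diff [0, 20, 40]).map (profileAt 20 40
    (codes a).left₁ (codes a).left₀ (codes a).right₀ (codes a).right₁),
    squareProduct allInvariants % (t ^ 2 + 1) ≠ 0 := by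
  fin_cases a <;> decide +kernel

variable {z : Fin 80}

lemma mem_diff_of_notMem {L : List (Fin 80)} (hz : z ∉ L) :
    (z : ℕ) ∈ (List.range 80).diff (L.map Fin.val) := by
  rw [List.nodup_range.mem_sdiff_iff, List.mem_range, List.mem_map_of_injective Fin.val_injective]
  exact ⟨z.isLt, hz⟩

lemma allInvariants_eq : allInvariants =
    (List.finRange 13 ×ˢ (List.range 80).diff [0, 40]).map fun p => profileAt 0 40
      (codes p.1).left₀ (codes p.1).left₁ (codes p.1).right₀ (codes p.1).right₁ p.2 := by
  simp only [allInvariants, funext fun a => (profile_zero_forty a).symm, SProd.sprod, List.product,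
    List.map_flatMap, List.map_map, Function.comp_def]

lemma mem_product_diff (hz : z ∉ [0, 40]) :
    (a, (z : ℕ)) ∈ List.finRange 13 ×ˢ (List.range 80).diff [0, 40] :=
  List.mem_product.2 ⟨List.mem_finRange a, mem_diff_of_notMem hz⟩

lemma tripleInvariant_mem_allInvariants (hz : z ∉ [0, 40]) :
    tripleInvariant (codes a).code 0 40 z ∈ allInvariants := by
  rw [(isDoublyEven_codes a).tripleInvariant_zero_forty, allInvariants_eq]
  exact List.mem_map.2 ⟨(a, z), mem_product_diff a hz, rfl⟩

lemma notMem_markedValues {t : ℕ} (ht : t ∉ allInvariants) : t ∉ markedValues codes := by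
  rintro ⟨b, z, hz, rfl⟩
  exact ht (tripleInvariant_mem_allInvariants b hz)

lemma isSeparated_codes : IsSeparated codes where
  eq_of_eq a b z hz z' hz' h := by
    rw [(isDoublyEven_codes a).tripleInvariant_zero_forty,
      (isDoublyEven_codes b).tripleInvariant_zero_forty] at h
    have hnodup := nodup_allInvariants
    rw [allInvariants_eq] at hnodup
    have hpair := List.inj_on_of_nodup_map hnodup
      (mem_product_diff a hz) (mem_product_diff b hz') h
    exact ⟨congrArg Prod.fst hpair, Fin.ext (congrArg Prod.snd hpair)⟩
  zero_sixty a z hz := by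
    rw [(isDoublyEven_codes a).tripleInvariant_zero_sixty]
    refine notMem_markedValues (notMem_of_squareProduct_mod_ne_zero (profile_zero_sixty a _ ?_))
    exact List.mem_map.2 ⟨z, mem_diff_of_notMem hz, rfl⟩
  twenty_forty a z hz := by
    rw [(isDoublyEven_codes a).tripleInvariant_twenty_forty]
    refine notMem_markedValues (notMem_of_squareProduct_mod_ne_zero (profile_twenty_forty a _ ?_))
    exact List.mem_map.2 ⟨z, mem_diff_of_notMem hz, rfl⟩

end Verification

end SExtremal78

/-- There exist at least 1942 pairwise inequivalent s-extremal singly even self-dual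
`[78, 39, 14]` codes: singly even self-dual codes of length 78 with minimum weight 14
whose shadows have minimum weight 15. -/
theorem exists_1942_sExtremal_78 :
    ∃ f : Fin 1942 → Submodule (ZMod 2) (Fin 78 → ZMod 2),
      (∀ i, IsSinglyEvenSelfDual (f i) ∧
        Module.finrank (ZMod 2) (f i) = 39 ∧
        minWt (f i) = 14 ∧
        minWtSet (shadow (f i)) = 15) ∧
      ∀ i j, i ≠ j → ¬ CodeEquiv (f i) (f j) := by
  obtain ⟨A, hcard, hne, hpair⟩ :=
    SExtremal78.isSeparated_codes.exists_inequivalent SExtremal78.isExtremal_codes (n := 1942)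
      (by norm_num)
  let e : Fin 1942 ≃ A := (A.equivFinOfCardEq hcard).symm
  refine ⟨fun i => (SExtremal78.codes (e i).1.1).subtractedCode (e i).1.2, fun i => ?_,
    fun i j hij => ?_⟩
  · have hc := SExtremal78.isExtremal_codes (e i).1.1
    have hp := hne (e i) (e i).2
    exact ⟨hc.isSinglyEvenSelfDual_subtractedCode hp, hc.finrank_subtractedCode hp,
      hc.minWt_subtractedCode hp, hc.minWtSet_shadow_subtractedCode hp⟩
  · exact hpair (e i).2 (e j).2 (Subtype.coe_injective.ne (e.injective.ne hij))
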